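/- arXiv:2008.13179 — 5 statements merged into one kernel-verified Lean document; each statement's English description precedes it below -/
import Mathlib

section
/- (Consistency theorem.) Let 0 < R₁ < R₀ < R and let D = {(ϖ,z) ∈ ℝ² : √(ϖ²+z²) < R}. Assume the Setup holds with O an open neighbourhood of the closure D̄, except that Π is only required to be nonvanishing (Π ≠ 0 on O, the requirement ϖ > 0 being dropped) and K is only required to be continuous on D̄. Assume the equation-of-state/Euler hypotheses with u : O → ℝ of class C², and in addition Π is C³, F and A are C²; Ω is constant on {√(ϖ²+z²) ≤ R₀}; u ≤ 0 (hence ρ = P = 0) on {√(ϖ²+z²) ≥ R₁}; and (C): (∂₁Π)² + (∂₃Π)² ≠ 0 on D̄. Suppose F, A, Π, u satisfy (N.9a), (N.9b), (N.9c) on O with this K. Define D₀ := (∂₁Π)² + (∂₃Π)², K̃₁ := D₀⁻¹·(∂₁Π·RH(Ya) + ∂₃Π·RH(Yb)) and K̃₃ := D₀⁻¹·(−∂₃Π·RH(Ya) + ∂₁Π·RH(Yb)), where RH(Ya), RH(Yb) denote the right-hand sides of (Ya), (Yb), and for a constant K_O define K̃(ϖ,z) := K_O + ∫₀^z K̃₃(0,z′)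 dz′ + ∫₀^ϖ K̃₁(ϖ′,z) dϖ′ for (ϖ,z) ∈ D. If K̃ = K on D, then ∂₁K = K̃₁ and ∂₃K = K̃₃ on D; that is, equations (Ya) and (Yb) are satisfied on D. -/
open Real

/-- Partial derivative in the first coordinate `ϖ`. -/
noncomputable def d1 (f : ℝ × ℝ → ℝ) : ℝ × ℝ → ℝ := fun p => fderiv ℝ f p (1, 0)

/-- Partial derivative in the second coordinate `z`. -/
noncomputable def d3 (f : ℝ × ℝ → ℝ) : ℝ × ℝ → ℝ := fun p => fderiv ℝ f p (0, 1)

lemma hasDeriv_line1 {f : ℝ × ℝ → ℝ} {p : ℝ × ℝ} (h : DifferentiableAt ℝ f p) :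
    HasDerivAt (fun t => f (t, p.2)) (d1 f p) p.1 := by
  have h2 : HasDerivAt (fun t : ℝ => (t, p.2)) ((1:ℝ), (0:ℝ)) p.1 :=
    (hasDerivAt_id p.1).prodMk (hasDerivAt_const p.1 p.2)
  exact HasFDerivAt.comp_hasDerivAt (f := fun t : ℝ => (t, p.2)) p.1 h.hasFDerivAt h2

lemma hasDeriv_line3 {f : ℝ × ℝ → ℝ} {p : ℝ × ℝ} (h : DifferentiableAt ℝ f p) :
    HasDerivAt (fun t => f (p.1, t)) (d3 f p) p.2 := by
  have h2 : HasDerivAt (fun t : ℝ => (p.1, t)) ((0:ℝ), (1:ℝ)) p.2 :=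
    (hasDerivAt_const p.2 p.1).prodMk (hasDerivAt_id p.2)
  exact HasFDerivAt.comp_hasDerivAt (f := fun t : ℝ => (p.1, t)) p.2 h.hasFDerivAt h2

lemma contDiffOn_d1 {O : Set (ℝ × ℝ)} (hO : IsOpen O) {f : ℝ × ℝ → ℝ} {n m : WithTop ℕ∞}
    (hf : ContDiffOn ℝ n f O) (h : m + 1 ≤ n) : ContDiffOn ℝ m (d1 f) O :=
  (hf.fderiv_of_isOpen hO h).clm_apply contDiffOn_const

lemma contDiffOn_d3 {O : Set (ℝ × ℝ)} (hO : IsOpen O) {f : ℝ × ℝ → ℝ} {n m : WithTop ℕ∞}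
    (hf : ContDiffOn ℝ n f O) (h : m + 1 ≤ n) : ContDiffOn ℝ m (d3 f) O :=
  (hf.fderiv_of_isOpen hO h).clm_apply contDiffOn_const

lemma contDiffOn_diffAt {O : Set (ℝ × ℝ)} (hO : IsOpen O) {f : ℝ × ℝ → ℝ} {n : WithTop ℕ∞}
    (hf : ContDiffOn ℝ n f O) (h : n ≠ 0) {p : ℝ × ℝ} (hp : p ∈ O) : DifferentiableAt ℝ f p :=
  (hf.contDiffAt (hO.mem_nhds hp)).differentiableAt h

lemma d_symm {O : Set (ℝ × ℝ)} (hO : IsOpen O) {f : ℝ × ℝ → ℝ}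
    (hf : ContDiffOn ℝ 2 f O) {p : ℝ × ℝ} (hp : p ∈ O) : d3 (d1 f) p = d1 (d3 f) p := by
  have hs := (hf.contDiffAt (hO.mem_nhds hp)).isSymmSndFDerivAt (by simp)
  have hd : DifferentiableAt ℝ (fderiv ℝ f) p :=
    ((hf.fderiv_of_isOpen hO (m := 1) (by norm_num)).contDiffAt
      (hO.mem_nhds hp)).differentiableAt (by norm_num)
  have h1 : d3 (d1 f) p = fderiv ℝ (fderiv ℝ f) p (0, 1) (1, 0) := by
    unfold d3 d1
    rw [fderiv_clm_apply hd (by fun_prop)]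
    simp
  have h2 : d1 (d3 f) p = fderiv ℝ (fderiv ℝ f) p (1, 0) (0, 1) := by
    unfold d3 d1
    rw [fderiv_clm_apply hd (by fun_prop)]
    simp
  rw [h1, h2, hs]

lemma isOpen_disc (R : ℝ) : IsOpen {p : ℝ × ℝ | p.1 ^ 2 + p.2 ^ 2 < R ^ 2} :=
  isOpen_lt (by fun_prop) (by fun_prop)

lemma sq_le_of_mem_uIcc {x t : ℝ} (h : t ∈ Set.uIcc 0 x) : t ^ 2 ≤ x ^ 2 := by
  rcases le_total 0 x with hx | hx
  · rw [Set.uIcc_of_le hx] at h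
    nlinarith [h.1, h.2]
  · rw [Set.uIcc_of_ge hx] at h
    nlinarith [h.1, h.2]

/-- Quadrature lemma. -/
lemma quad_lemma (R : ℝ) (D : Set (ℝ × ℝ)) (hD : D = {p : ℝ × ℝ | p.1 ^ 2 + p.2 ^ 2 < R ^ 2})
    (X1 X3 K b : ℝ × ℝ → ℝ) (KO : ℝ)
    (hX1 : ContDiffOn ℝ 1 X1 D) (hX3 : ContDiffOn ℝ 1 X3 D) (hb : ContinuousOn b D)
    (hK : ∀ p ∈ D, K p = KO + (∫ t in (0:ℝ)..p.2, X3 (0, t)) + ∫ t in (0:ℝ)..p.1, X1 (t, p.2))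
    (hL : ∀ p ∈ D, ∀ k : ℝ, HasDerivAt (fun t => K (t, p.2)) (X1 p) p.1 →
      HasDerivAt (fun t => K (p.1, t)) k p.2 → d3 X1 p - d1 X3 p = b p * (k - X3 p)) :
    ∀ p ∈ D, HasDerivAt (fun t => K (t, p.2)) (X1 p) p.1 ∧
      HasDerivAt (fun t => K (p.1, t)) (X3 p) p.2 := by
  have hDo : IsOpen D := hD ▸ isOpen_disc R
  have hmem : ∀ p : ℝ × ℝ, p ∈ D ↔ p.1 ^ 2 + p.2 ^ 2 < R ^ 2 := by intro p; rw [hD]; rfl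
  have hY : ContinuousOn (d3 X1) D := (contDiffOn_d3 hDo hX1 (m := 0) (by norm_num)).continuousOn
  have hline : ∀ f : ℝ × ℝ → ℝ, ContinuousOn f D → ∀ p ∈ D,
      IntervalIntegrable (fun t => f (t, p.2)) MeasureTheory.volume 0 p.1 ∧
      HasDerivAt (fun x => ∫ t in (0:ℝ)..x, f (t, p.2)) (f p) p.1 := by
    intro f hf p hp
    have hi : IntervalIntegrable (fun t => f (t, p.2)) MeasureTheory.volume 0 p.1 := by
      apply ContinuousOn.intervalIntegrable
      apply hf.comp (by fun_prop)
      intro t ht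
      have := sq_le_of_mem_uIcc ht
      rw [hmem] at hp ⊢
      simp only; linarith
    refine ⟨hi, ?_⟩
    have ho : IsOpen {t : ℝ | (t, p.2) ∈ D} := hDo.preimage (by fun_prop)
    have hc : ContinuousOn (fun t => f (t, p.2)) {t : ℝ | (t, p.2) ∈ D} :=
      hf.comp (by fun_prop) (fun t ht => ht)
    exact intervalIntegral.integral_hasDerivAt_right hi
      (hc.stronglyMeasurableAtFilter ho _ hp) (hc.continuousAt (ho.mem_nhds hp))
  have hK1 : ∀ p ∈ D, HasDerivAt (fun t => K (t, p.2)) (X1 p) p.1 := by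
    intro p hp
    have h := ((hline X1 hX1.continuousOn p hp).2).const_add
      (KO + (∫ t in (0:ℝ)..p.2, X3 (0, t)))
    refine h.congr_of_eventuallyEq ?_
    have ho : IsOpen {t : ℝ | (t, p.2) ∈ D} := hDo.preimage (by fun_prop)
    filter_upwards [ho.mem_nhds (show p.1 ∈ _ from hp)] with t ht
    exact hK _ ht
  have hK3 : ∀ p ∈ D, HasDerivAt (fun t => K (p.1, t))
      (X3 (0, p.2) + ∫ t in (0:ℝ)..p.1, d3 X1 (t, p.2)) p.2 := by
    intro p hp
    have hp' := (hmem p).1 hp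
    have hA : HasDerivAt (fun z => ∫ t in (0:ℝ)..z, X3 (0, t)) (X3 (0, p.2)) p.2 := by
      have ho : IsOpen {t : ℝ | ((0:ℝ), t) ∈ D} := hDo.preimage (by fun_prop)
      have hc : ContinuousOn (fun t => X3 (0, t)) {t : ℝ | ((0:ℝ), t) ∈ D} :=
        hX3.continuousOn.comp (by fun_prop) (fun t ht => ht)
      have h0 : p.2 ∈ {t : ℝ | ((0:ℝ), t) ∈ D} := by
        simp only [Set.mem_ofPred_eq, hmem]; nlinarith
      refine intervalIntegral.integral_hasDerivAt_right ?_
        (hc.stronglyMeasurableAtFilter ho _ h0) (hc.continuousAt (ho.mem_nhds h0))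
      apply ContinuousOn.intervalIntegrable
      apply hc.mono
      intro t ht
      have := sq_le_of_mem_uIcc ht
      simp only [Set.mem_ofPred_eq, hmem]; nlinarith
    have hB : HasDerivAt (fun z => ∫ t in (0:ℝ)..p.1, X1 (t, z))
        (∫ t in (0:ℝ)..p.1, d3 X1 (t, p.2)) p.2 := by
      have ho : IsOpen {y : ℝ | p.1 ^ 2 + y ^ 2 < R ^ 2} := isOpen_lt (by fun_prop) (by fun_prop)
      obtain ⟨δ, hδ, hball⟩ := Metric.nhds_basis_closedBall.mem_iff.1
        (ho.mem_nhds (show p.2 ∈ {y : ℝ | p.1 ^ 2 + y ^ 2 < R ^ 2} from hp'))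
      have hin : ∀ t ∈ Set.uIcc 0 p.1, ∀ y ∈ Metric.closedBall p.2 δ, (t, y) ∈ D := by
        intro t ht y hy
        have h1 := sq_le_of_mem_uIcc ht
        have h2 : p.1 ^ 2 + y ^ 2 < R ^ 2 := hball hy
        rw [hmem]; simp only; linarith
      have hcomp : IsCompact (Set.uIcc 0 p.1 ×ˢ Metric.closedBall p.2 δ) :=
        isCompact_uIcc.prod (isCompact_closedBall _ _)
      obtain ⟨C, hC⟩ := hcomp.exists_bound_of_continuousOn
        (hY.mono (fun q hq => hin q.1 hq.1 q.2 hq.2))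
      have hcc : ∀ f : ℝ × ℝ → ℝ, ContinuousOn f D → ∀ y ∈ Metric.closedBall p.2 δ,
          ContinuousOn (fun t => f (t, y)) (Set.uIcc 0 p.1) := by
        intro f hf y hy
        exact hf.comp (by fun_prop) (fun t ht => hin t ht y hy)
      have hmeas : ∀ f : ℝ × ℝ → ℝ, ContinuousOn f D → ∀ y ∈ Metric.closedBall p.2 δ,
          MeasureTheory.AEStronglyMeasurable (fun t => f (t, y))
            (MeasureTheory.volume.restrict (Set.uIoc 0 p.1)) := by
        intro f hf y hy
        exact ((hcc f hf y hy).mono Set.uIoc_subset_uIcc).aestronglyMeasurable measurableSet_uIoc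
      have hself : p.2 ∈ Metric.closedBall p.2 δ := Metric.mem_closedBall_self hδ.le
      refine (intervalIntegral.hasDerivAt_integral_of_dominated_loc_of_deriv_le
        (F := fun z t => X1 (t, z)) (F' := fun z t => d3 X1 (t, z))
        (bound := fun _ => C) (Metric.closedBall_mem_nhds p.2 hδ) ?_ ?_ ?_ ?_ ?_ ?_).2
      · filter_upwards [Metric.closedBall_mem_nhds p.2 hδ] with y hy
        exact hmeas X1 hX1.continuousOn y hy
      · exact (hcc X1 hX1.continuousOn _ hself).intervalIntegrable
      · exact hmeas _ hY _ hself
      · filter_upwards with t ht y hy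
        exact hC (t, y) ⟨Set.uIoc_subset_uIcc ht, hy⟩
      · simp
      · filter_upwards with t ht y hy
        exact hasDeriv_line3 (p := (t, y))
          (contDiffOn_diffAt hDo hX1 (by norm_num) (hin t (Set.uIoc_subset_uIcc ht) y hy))
    have h := (hA.const_add KO).add hB
    refine h.congr_of_eventuallyEq ?_
    have ho : IsOpen {t : ℝ | (p.1, t) ∈ D} := hDo.preimage (by fun_prop)
    filter_upwards [ho.mem_nhds (show p.2 ∈ _ from hp)] with t ht
    exact hK _ ht
  set W : ℝ × ℝ → ℝ := fun p => X3 (0, p.2) + (∫ t in (0:ℝ)..p.1, d3 X1 (t, p.2)) - X3 p with hW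
  have hW1 : ∀ p ∈ D, HasDerivAt (fun t => W (t, p.2)) (b p * W p) p.1 := by
    intro p hp
    have h := (((hline _ hY p hp).2).const_add (X3 (0, p.2))).sub
      (hasDeriv_line1 (contDiffOn_diffAt hDo hX3 (by norm_num) hp))
    rw [hL p hp _ (hK1 p hp) (hK3 p hp)] at h
    exact h
  intro p hp
  refine ⟨hK1 p hp, ?_⟩
  have hp' := (hmem p).1 hp
  have hin : ∀ s ∈ Set.Icc (0:ℝ) 1, (s * p.1, p.2) ∈ D := by
    intro s hs
    rw [hmem]
    have : s ^ 2 ≤ 1 := by nlinarith [hs.1, hs.2]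
    simp only
    nlinarith [sq_nonneg p.1]
  obtain ⟨C, hC⟩ := (isCompact_Icc (a := (0:ℝ)) (b := 1)).exists_bound_of_continuousOn
    (f := fun s => b (s * p.1, p.2)) (hb.comp (by fun_prop) hin)
  have hg : ∀ s ∈ Set.Icc (0:ℝ) 1, HasDerivAt (fun s => W (s * p.1, p.2))
      (b (s * p.1, p.2) * W (s * p.1, p.2) * p.1) s := by
    intro s hs
    have h1 := hW1 _ (hin s hs)
    have h2 : HasDerivAt (fun s : ℝ => s * p.1) p.1 s := by
      simpa using (hasDerivAt_id s).mul_const p.1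
    exact HasDerivAt.comp (h₂ := fun t => W (t, p.2)) s h1 h2
  have hz := eq_zero_of_abs_deriv_le_mul_abs_self_of_eq_zero_right
    (f := fun s => W (s * p.1, p.2)) (f' := fun s => b (s * p.1, p.2) * W (s * p.1, p.2) * p.1)
    (K := C * |p.1|) (a := 0) (b := 1)
    (fun s hs => (hg s hs).continuousAt.continuousWithinAt)
    (fun s hs => (hg s (Set.Ico_subset_Icc_self hs)).hasDerivWithinAt)
    (by simp [hW]) (by
      intro s hs
      have := hC s (Set.Ico_subset_Icc_self hs)
      rw [norm_mul, norm_mul, Real.norm_eq_abs p.1]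
      have h1 := mul_le_mul_of_nonneg_right this
        (mul_nonneg (norm_nonneg (W (s * p.1, p.2))) (abs_nonneg p.1))
      calc _ = _ := by ring
        _ ≤ _ := h1
        _ = _ := by ring) 1 (by simp)
  have h3 := hK3 p hp
  simp only [one_mul, hW] at hz
  rw [sub_eq_zero] at hz
  rwa [hz] at h3

/-- The pressure function is differentiable everywhere. -/
lemma pf_deriv {c : ℝ} {rf pf : ℝ → ℝ} (hrfc : Continuous rf) (hpfc : Continuous pf)
    (hrf0 : ∀ s ≤ (0:ℝ), rf s = 0) (hpf0 : ∀ s ≤ (0:ℝ), pf s = 0)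
    (hpf' : ∀ s > (0:ℝ), HasDerivAt pf (rf s + pf s / c ^ 2) s) (s : ℝ) :
    HasDerivAt pf (rf s + pf s / c ^ 2) s := by
  have hg : Continuous (fun s => rf s + pf s / c ^ 2) := hrfc.add (hpfc.div_const _)
  have hneg : ∀ s < (0:ℝ), HasDerivAt pf (rf s + pf s / c ^ 2) s := by
    intro s hs
    rw [hrf0 s hs.le, hpf0 s hs.le]
    simp only [zero_div, add_zero]
    refine (hasDerivAt_const s (0:ℝ)).congr_of_eventuallyEq ?_
    filter_upwards [Iio_mem_nhds hs] with t ht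
    exact hpf0 t (le_of_lt ht)
  exact hasDerivAt_of_hasDerivAt_of_ne' (x := 0)
    (fun y hy => by
      rcases lt_or_gt_of_ne hy with h | h
      · exact hneg y h
      · exact hpf' y h) hpfc.continuousAt hg.continuousAt s

/-- Algebraic identity behind the consistency theorem. -/
lemma alg_lemma (κ w e a q ε P E Pt Pt1 Pt3 Pt111 Pt133 F1 F3 F11 F13 F33 A1 A3 A11 A13 A33 P1 k S : ℝ)
    (he : e ≠ 0) (hPt : Pt ≠ 0) (hE : E ≠ 0)
    (ha : F11 + F33 + (1 / Pt) * (Pt1 * F1 + Pt3 * F3)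
        + (e ^ 2 / (2 * Pt ^ 2)) * (A1 ^ 2 + A3 ^ 2)
      = (κ / 2) * q * ((ε + P) * (e * a ^ 2 + e⁻¹ * w ^ 2 * Pt ^ 2) / E + 2 * P))
    (hb : A11 + A33 - (1 / Pt) * (Pt1 * A1 + Pt3 * A3) + 4 * (F1 * A1 + F3 * A3)
      = -(2 * κ) * q * (ε + P) * (e⁻¹ * w * Pt ^ 2 * a) / E)
    (hS : S = 2 * κ * q * P * Pt)
    (hS1 : Pt111 + Pt133 = 2 * κ * q * (2 * (-F1 + k) * P * Pt + P1 * Pt + P * Pt1))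
    (hP1 : P1 * E + (ε + P) * (F1 * (e * a ^ 2 + e⁻¹ * w ^ 2 * Pt ^ 2) + e * a * w * A1
      - e⁻¹ * w ^ 2 * Pt * Pt1) = 0) :
    (1 / 2) * (Pt111 - Pt133) + Pt133
      + Pt1 * (F1 ^ 2 - F3 ^ 2) + Pt * (2 * F1 * F11 - 2 * F3 * F13)
      + 2 * Pt3 * F1 * F3 + 2 * Pt * (F13 * F3 + F1 * F33)
      - e ^ 2 * (4 * F1 * Pt - Pt1) / (4 * Pt ^ 2) * (A1 ^ 2 - A3 ^ 2)
      - e ^ 2 / (4 * Pt) * (2 * A1 * A11 - 2 * A3 * A13)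
      - e ^ 2 * (4 * F3 * Pt - Pt3) / (2 * Pt ^ 2) * (A1 * A3)
      - e ^ 2 / (2 * Pt) * (A13 * A3 + A1 * A33)
    = Pt1 * (κ * q * P - (F1 ^ 2 + F3 ^ 2) - e ^ 2 / (4 * Pt ^ 2) * (A1 ^ 2 + A3 ^ 2)
        + κ * q * Pt ^ 2 * (ε + P) * e⁻¹ * w ^ 2 / E) + S * k := by
  have hF : F11 = -F33 - (1 / Pt) * (Pt1 * F1 + Pt3 * F3)
        - (e ^ 2 / (2 * Pt ^ 2)) * (A1 ^ 2 + A3 ^ 2)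
       + (κ / 2) * q * ((ε + P) * (e * a ^ 2 + e⁻¹ * w ^ 2 * Pt ^ 2) / E + 2 * P) := by
    linear_combination ha
  have hA : A11 = - A33 + (1 / Pt) * (Pt1 * A1 + Pt3 * A3) - 4 * (F1 * A1 + F3 * A3)
      + -(2 * κ) * q * (ε + P) * (e⁻¹ * w * Pt ^ 2 * a) / E := by
    linear_combination hb
  have hPt111 : Pt111 = - Pt133 + 2 * κ * q * (2 * (-F1 + k) * P * Pt + P1 * Pt + P * Pt1) := by
    linear_combination hS1
  have hP : P1 = - (ε + P) * (F1 * (e * a ^ 2 + e⁻¹ * w ^ 2 * Pt ^ 2) + e * a * w * A1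
      - e⁻¹ * w ^ 2 * Pt * Pt1) / E := by
    rw [eq_div_iff hE]; linear_combination hP1
  rw [hPt111, hF, hA, hP, hS]
  field_simp
  ring

lemma ya_deriv {x : ℝ} {a b g f f1 f3 A1 A3 : ℝ → ℝ} {a' b' g' f' f1' f3' A1' A3' : ℝ}
    (ha : HasDerivAt a a' x) (hb : HasDerivAt b b' x) (hg : HasDerivAt g g' x)
    (hf : HasDerivAt f f' x) (hf1 : HasDerivAt f1 f1' x) (hf3 : HasDerivAt f3 f3' x)
    (hA1 : HasDerivAt A1 A1' x) (hA3 : HasDerivAt A3 A3' x) (hg0 : g x ≠ 0) :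
    HasDerivAt (fun t => (1/2) * (a t - b t) + g t * ((f1 t) ^ 2 - (f3 t) ^ 2)
        - (exp (4 * f t) / (4 * g t)) * ((A1 t) ^ 2 - (A3 t) ^ 2))
      ((1/2) * (a' - b') + g' * (f1 x ^ 2 - f3 x ^ 2) + g x * (2 * f1 x * f1' - 2 * f3 x * f3')
        - exp (2 * f x) ^ 2 * (4 * f' * g x - g') / (4 * g x ^ 2) * (A1 x ^ 2 - A3 x ^ 2)
        - exp (2 * f x) ^ 2 / (4 * g x) * (2 * A1 x * A1' - 2 * A3 x * A3')) x := by
  have h := (((ha.sub hb).const_mul (1/2)).add (hg.mul ((hf1.pow 2).sub (hf3.pow 2)))).sub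
    ((((hf.const_mul 4).exp).div (hg.const_mul 4) (mul_ne_zero four_ne_zero hg0)).mul
      ((hA1.pow 2).sub (hA3.pow 2)))
  have he : exp (4 * f x) = exp (2 * f x) ^ 2 := by
    rw [← Real.exp_nat_mul]; congr 1; push_cast; ring
  refine (h.congr_deriv ?_)
  simp only [he, Pi.pow_apply, Pi.sub_apply, Pi.mul_apply, Pi.div_apply]
  field_simp
  ring

lemma yb_deriv {x : ℝ} {a g f f1 f3 A1 A3 : ℝ → ℝ} {a' g' f' f1' f3' A1' A3' : ℝ}
    (ha : HasDerivAt a a' x) (hg : HasDerivAt g g' x)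
    (hf : HasDerivAt f f' x) (hf1 : HasDerivAt f1 f1' x) (hf3 : HasDerivAt f3 f3' x)
    (hA1 : HasDerivAt A1 A1' x) (hA3 : HasDerivAt A3 A3' x) (hg0 : g x ≠ 0) :
    HasDerivAt (fun t => a t + 2 * g t * f1 t * f3 t
        - (exp (4 * f t) / (2 * g t)) * (A1 t * A3 t))
      (a' + 2 * g' * f1 x * f3 x + 2 * g x * (f1' * f3 x + f1 x * f3')
        - exp (2 * f x) ^ 2 * (4 * f' * g x - g') / (2 * g x ^ 2) * (A1 x * A3 x)
        - exp (2 * f x) ^ 2 / (2 * g x) * (A1' * A3 x + A1 x * A3')) x := by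
  have h := (ha.add (((hg.const_mul 2).mul hf1).mul hf3)).sub
    ((((hf.const_mul 4).exp).div (hg.const_mul 2) (mul_ne_zero two_ne_zero hg0)).mul
      (hA1.mul hA3))
  have he : exp (4 * f x) = exp (2 * f x) ^ 2 := by
    rw [← Real.exp_nat_mul]; congr 1; push_cast; ring
  refine (h.congr_deriv ?_)
  simp only [he, Pi.mul_apply, Pi.div_apply]
  field_simp
  ring

lemma matter_lemma
    (c κ R₁ R₀ : ℝ) (hc : 0 < c) (hR₁ : 0 < R₁) (hR₁R₀ : R₁ < R₀)
    (O : Set (ℝ × ℝ)) (hO : IsOpen O)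
    (F A Pt K ρ P Ω u : ℝ × ℝ → ℝ) (huc : ContinuousOn u O)
    (E : ℝ × ℝ → ℝ)
    (hE : E = fun p => exp (2 * F p) * (1 + Ω p * A p / c) ^ 2
      - exp (-(2 * F p)) * (Ω p ^ 2 / c ^ 2) * (Pt p) ^ 2)
    (hEpos : ∀ p ∈ O, 0 < E p)
    (rf pf : ℝ → ℝ)
    (hrf0 : ∀ s ≤ (0:ℝ), rf s = 0) (hpf0 : ∀ s ≤ (0:ℝ), pf s = 0)
    (hpf' : ∀ s, HasDerivAt pf (rf s + pf s / c ^ 2) s)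
    (hρu : ∀ p ∈ O, ρ p = rf (u p)) (hPu : ∀ p ∈ O, P p = pf (u p))
    (hBern : ∀ p ∈ {x ∈ O | 0 < u x}, ∀ q ∈ connectedComponentIn {x ∈ O | 0 < u x} p,
      u q / c ^ 2 + Real.log (E q) / 2 = u p / c ^ 2 + Real.log (E p) / 2)
    (Ωc : ℝ) (hΩconst : ∀ p : ℝ × ℝ, p.1 ^ 2 + p.2 ^ 2 ≤ R₀ ^ 2 → Ω p = Ωc)
    (hvac : ∀ p ∈ O, R₁ ^ 2 ≤ p.1 ^ 2 + p.2 ^ 2 → u p ≤ 0)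
    (γ : ℝ → ℝ × ℝ) (t₀ : ℝ) (p : ℝ × ℝ) (hγp : γ t₀ = p) (hp : p ∈ O) (hγ : ContinuousAt γ t₀)
    (F1 A1 Pt1 u1 k : ℝ)
    (hF1 : HasDerivAt (fun t => F (γ t)) F1 t₀) (hA1 : HasDerivAt (fun t => A (γ t)) A1 t₀)
    (hPt1 : HasDerivAt (fun t => Pt (γ t)) Pt1 t₀) (hu1 : HasDerivAt (fun t => u (γ t)) u1 t₀)
    (hk : HasDerivAt (fun t => K (γ t)) k t₀) :
    ∃ P1 : ℝ, HasDerivAt (fun t => 2 * κ * exp (2 * (-F (γ t) + K (γ t))) * P (γ t) * Pt (γ t))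
      (2 * κ * exp (2 * (-F p + K p)) *
        (2 * (-F1 + k) * P p * Pt p + P1 * Pt p + P p * Pt1)) t₀ ∧
      P1 * E p + (c ^ 2 * ρ p + P p) *
        (F1 * (exp (2 * F p) * (1 + Ω p * A p / c) ^ 2
            + (exp (2 * F p))⁻¹ * (Ω p / c) ^ 2 * (Pt p) ^ 2)
          + exp (2 * F p) * (1 + Ω p * A p / c) * (Ω p / c) * A1
          - (exp (2 * F p))⁻¹ * (Ω p / c) ^ 2 * Pt p * Pt1) = 0 := by
  have hev : ∀ᶠ t in nhds t₀, γ t ∈ O := hγ.eventually (by rw [hγp]; exact hO.mem_nhds hp)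
  refine ⟨(rf (u p) + pf (u p) / c ^ 2) * u1, ?_, ?_⟩
  · have hP1 : HasDerivAt (fun t => P (γ t)) ((rf (u p) + pf (u p) / c ^ 2) * u1) t₀ := by
      have h := HasDerivAt.comp t₀ (hpf' (u (γ t₀))) hu1
      rw [hγp] at h
      refine h.congr_of_eventuallyEq ?_
      filter_upwards [hev] with t ht
      exact hPu _ ht
    have h := (((((hF1.neg.add hk).const_mul 2).exp).const_mul (2 * κ)).mul hP1).mul hPt1
    refine h.congr_deriv ?_
    simp only [Pi.mul_apply, Pi.add_apply, Pi.neg_apply, hγp]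
    ring
  · rw [hρu p hp, hPu p hp]
    by_cases hup : u p ≤ 0
    · rw [hrf0 _ hup, hpf0 _ hup]; simp
    · push Not at hup
      have hU : IsOpen {x ∈ O | 0 < u x} := huc.isOpen_inter_preimage hO isOpen_Ioi
      have hpU : p ∈ {x ∈ O | 0 < u x} := ⟨hp, hup⟩
      have hcc := (hU.connectedComponentIn (x := p)).mem_nhds (mem_connectedComponentIn hpU)
      have hr : p.1 ^ 2 + p.2 ^ 2 < R₀ ^ 2 := by
        by_contra hcon
        push Not at hcon
        have := hvac p hp (by nlinarith)
        linarith
      have hΩn : ∀ᶠ t in nhds t₀, Ω (γ t) = Ωc := by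
        have : ∀ᶠ q in nhds (γ t₀), Ω q = Ωc := by
          rw [hγp]
          filter_upwards [(isOpen_disc R₀).mem_nhds hr] with q hq
          exact hΩconst q (le_of_lt hq)
        exact hγ.eventually this
      have hBn : ∀ᶠ t in nhds t₀, u (γ t) / c ^ 2 + Real.log (E (γ t)) / 2
          = u p / c ^ 2 + Real.log (E p) / 2 := by
        have : ∀ᶠ q in nhds (γ t₀), u q / c ^ 2 + Real.log (E q) / 2
          = u p / c ^ 2 + Real.log (E p) / 2 := by
          rw [hγp]
          filter_upwards [hcc] with q hq
          exact hBern p hpU q hq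
        exact hγ.eventually this
      have hΩp : Ω p = Ωc := hΩconst p hr.le
      have hEd : HasDerivAt (fun t => E (γ t))
          (2 * (F1 * (exp (2 * F p) * (1 + Ω p * A p / c) ^ 2
            + (exp (2 * F p))⁻¹ * (Ω p / c) ^ 2 * (Pt p) ^ 2)
          + exp (2 * F p) * (1 + Ω p * A p / c) * (Ω p / c) * A1
          - (exp (2 * F p))⁻¹ * (Ω p / c) ^ 2 * Pt p * Pt1)) t₀ := by
        have h := (((hF1.const_mul 2).exp).mul
          ((((hA1.const_mul Ωc).div_const c).const_add 1).pow 2)).sub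
          (((((hF1.const_mul 2).neg).exp).mul_const (Ωc ^ 2 / c ^ 2)).mul (hPt1.pow 2))
        have h' := h.congr_of_eventuallyEq (f₁ := fun t => E (γ t)) (by
          filter_upwards [hΩn] with t ht
          simp [hE, ht])
        refine h'.congr_deriv ?_
        simp only [Pi.mul_apply, Pi.add_apply, Pi.neg_apply, Pi.pow_apply, hγp, hΩp, Real.exp_neg,
          show (2:ℕ) - 1 = 1 from rfl, pow_one, Nat.cast_ofNat]
        field_simp
        ring
      have hEp := hEpos p hp
      have hsum := (hu1.div_const (c ^ 2)).add ((hEd.log (by rw [hγp]; exact hEp.ne')).div_const 2)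
      have h0 := (hasDerivAt_const t₀ (u p / c ^ 2 + Real.log (E p) / 2)).congr_of_eventuallyEq
        hBn
      have heq := hsum.unique h0
      rw [hγp] at heq
      have hc2 : c ^ 2 ≠ 0 := by positivity
      generalize (F1 * (exp (2 * F p) * (1 + Ω p * A p / c) ^ 2
            + (exp (2 * F p))⁻¹ * (Ω p / c) ^ 2 * (Pt p) ^ 2)
          + exp (2 * F p) * (1 + Ω p * A p / c) * (Ω p / c) * A1
          - (exp (2 * F p))⁻¹ * (Ω p / c) ^ 2 * Pt p * Pt1) = X at heq ⊢
      have hu1eq : u1 = - c ^ 2 * X / E p := by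
        field_simp at heq ⊢
        linarith
      rw [hu1eq]
      field_simp
      ring


/-- **Theorem 2 of the paper (consistency).**
On the disc `D = {ϖ² + z² < R²}`, with `Ω` constant on `{r ≤ R₀}`, `u ≤ 0` on
`{r ≥ R₁}` (`0 < R₁ < R₀ < R`), condition (C) on `D̄`, the equation-of-state/Euler
hypotheses, and `F, A, Pt, u` satisfying (N.9a)(N.9b)(N.9c) with the given continuous `K`:
if the quadrature `K̃` built from the right-hand sides of (Ya),(Yb) coincides with `K`
on `D`, then `∂₁K = K̃₁` and `∂₃K = K̃₃` on `D`, i.e. (Ya),(Yb) hold on `D`. -/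
theorem stmt_6
    (c κ R₁ R₀ R : ℝ) (hc : 0 < c) (hκ : 0 < κ)
    (hR₁ : 0 < R₁) (hR₁R₀ : R₁ < R₀) (hR₀R : R₀ < R)
    (Dset Dcl : Set (ℝ × ℝ))
    (hDset : Dset = {p : ℝ × ℝ | p.1 ^ 2 + p.2 ^ 2 < R ^ 2})
    (hDcl : Dcl = {p : ℝ × ℝ | p.1 ^ 2 + p.2 ^ 2 ≤ R ^ 2})
    (O : Set (ℝ × ℝ)) (hO : IsOpen O) (hDclO : Dcl ⊆ O)
    (F A Pt K ρ P Ω u : ℝ × ℝ → ℝ)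
    (hF : ContDiffOn ℝ 2 F O) (hA : ContDiffOn ℝ 2 A O)
    (hPt : ContDiffOn ℝ 3 Pt O) (hu : ContDiffOn ℝ 2 u O)
    (hKcont : ContinuousOn K Dcl)
    (hPtne : ∀ p ∈ O, Pt p ≠ 0)
    (hρc : ContinuousOn ρ O) (hPc : ContinuousOn P O) (hΩc : ContinuousOn Ω O)
    (hρ0 : ∀ p ∈ O, 0 ≤ ρ p) (hP0 : ∀ p ∈ O, 0 ≤ P p)
    (ε E : ℝ × ℝ → ℝ)
    (hε : ε = fun p => c ^ 2 * ρ p)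
    (hE : E = fun p => exp (2 * F p) * (1 + Ω p * A p / c) ^ 2
      - exp (-(2 * F p)) * (Ω p ^ 2 / c ^ 2) * (Pt p) ^ 2)
    (hEpos : ∀ p ∈ O, 0 < E p)
    (rf pf : ℝ → ℝ) (hrfc : Continuous rf) (hpfc : Continuous pf)
    (hrf0 : ∀ s ≤ (0:ℝ), rf s = 0) (hpf0 : ∀ s ≤ (0:ℝ), pf s = 0)
    (hpf' : ∀ s > (0:ℝ), HasDerivAt pf (rf s + pf s / c ^ 2) s)
    (hρu : ∀ p ∈ O, ρ p = rf (u p)) (hPu : ∀ p ∈ O, P p = pf (u p))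
    (G : ℝ × ℝ → ℝ) (hG : G = fun p => Real.log (E p) / 2)
    (hBern : ∀ p ∈ {x ∈ O | 0 < u x}, ∀ q ∈ connectedComponentIn {x ∈ O | 0 < u x} p,
      u q / c ^ 2 + G q = u p / c ^ 2 + G p)
    (hΩconst : ∃ Ωc : ℝ, ∀ p : ℝ × ℝ, p.1 ^ 2 + p.2 ^ 2 ≤ R₀ ^ 2 → Ω p = Ωc)
    (hvac : ∀ p ∈ O, R₁ ^ 2 ≤ p.1 ^ 2 + p.2 ^ 2 → u p ≤ 0)
    (hC : ∀ p ∈ Dcl, (d1 Pt p) ^ 2 + (d3 Pt p) ^ 2 ≠ 0)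
    (hN9a : ∀ p ∈ O,
      d1 (d1 F) p + d3 (d3 F) p
        + (1 / Pt p) * (d1 Pt p * d1 F p + d3 Pt p * d3 F p)
        + (exp (4 * F p) / (2 * (Pt p) ^ 2)) * ((d1 A p) ^ 2 + (d3 A p) ^ 2)
      = (κ / 2) * exp (2 * (-F p + K p)) *
          ((ε p + P p) * (exp (2 * F p) * (1 + Ω p * A p / c) ^ 2
            + exp (-(2 * F p)) * (Ω p ^ 2 / c ^ 2) * (Pt p) ^ 2) / E p + 2 * P p))
    (hN9b : ∀ p ∈ O,
      d1 (d1 A) p + d3 (d3 A) p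
        - (1 / Pt p) * (d1 Pt p * d1 A p + d3 Pt p * d3 A p)
        + 4 * (d1 F p * d1 A p + d3 F p * d3 A p)
      = -(2 * κ) * exp (2 * (-F p + K p)) * (ε p + P p) *
          (exp (-(2 * F p)) * (Ω p / c) * (Pt p) ^ 2 * (1 + Ω p * A p / c)) / E p)
    (hN9c : ∀ p ∈ O,
      d1 (d1 Pt) p + d3 (d3 Pt) p
      = 2 * κ * exp (2 * (-F p + K p)) * P p * Pt p)
    (D₀ RHYa RHYb Kt1 Kt3 : ℝ × ℝ → ℝ)
    (hD₀ : D₀ = fun p => (d1 Pt p) ^ 2 + (d3 Pt p) ^ 2)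
    (hRHYa : RHYa = fun p =>
      (1/2) * (d1 (d1 Pt) p - d3 (d3 Pt) p)
        + Pt p * ((d1 F p) ^ 2 - (d3 F p) ^ 2)
        - (exp (4 * F p) / (4 * Pt p)) * ((d1 A p) ^ 2 - (d3 A p) ^ 2))
    (hRHYb : RHYb = fun p =>
      d1 (d3 Pt) p + 2 * Pt p * d1 F p * d3 F p
        - (exp (4 * F p) / (2 * Pt p)) * (d1 A p * d3 A p))
    (hKt1 : Kt1 = fun p => (D₀ p)⁻¹ * (d1 Pt p * RHYa p + d3 Pt p * RHYb p))
    (hKt3 : Kt3 = fun p => (D₀ p)⁻¹ * (-(d3 Pt p) * RHYa p + d1 Pt p * RHYb p))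
    (KO : ℝ) (Ktilde : ℝ × ℝ → ℝ)
    (hKtilde : ∀ p : ℝ × ℝ, Ktilde p =
      KO + (∫ t in (0:ℝ)..p.2, Kt3 (0, t)) + ∫ t in (0:ℝ)..p.1, Kt1 (t, p.2))
    (hfix : ∀ p ∈ Dset, Ktilde p = K p) :
    ∀ p ∈ Dset,
      HasDerivAt (fun t => K (t, p.2)) (Kt1 p) p.1 ∧
      HasDerivAt (fun t => K (p.1, t)) (Kt3 p) p.2 := by
  obtain ⟨Ωc, hΩc'⟩ := hΩconst
  have hDo : IsOpen Dset := hDset ▸ isOpen_disc R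
  have hDDcl : Dset ⊆ Dcl := by
    rw [hDset, hDcl]; intro p hp; exact le_of_lt (show p.1 ^ 2 + p.2 ^ 2 < R ^ 2 from hp)
  have hDO : Dset ⊆ O := hDDcl.trans hDclO
  have hpfd := pf_deriv hrfc hpfc hrf0 hpf0 hpf'
  have F0 := hF.mono hDO
  have A0 := hA.mono hDO
  have P0 := hPt.mono hDO
  have u0 := hu.mono hDO
  have F1 : ContDiffOn ℝ 1 (d1 F) Dset := contDiffOn_d1 hDo F0 (by norm_num)
  have F3 : ContDiffOn ℝ 1 (d3 F) Dset := contDiffOn_d3 hDo F0 (by norm_num)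
  have A1 : ContDiffOn ℝ 1 (d1 A) Dset := contDiffOn_d1 hDo A0 (by norm_num)
  have A3 : ContDiffOn ℝ 1 (d3 A) Dset := contDiffOn_d3 hDo A0 (by norm_num)
  have P1 : ContDiffOn ℝ 2 (d1 Pt) Dset := contDiffOn_d1 hDo P0 (by norm_num)
  have P3 : ContDiffOn ℝ 2 (d3 Pt) Dset := contDiffOn_d3 hDo P0 (by norm_num)
  have P11 : ContDiffOn ℝ 1 (d1 (d1 Pt)) Dset := contDiffOn_d1 hDo P1 (by norm_num)
  have P13 : ContDiffOn ℝ 1 (d1 (d3 Pt)) Dset := contDiffOn_d1 hDo P3 (by norm_num)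
  have P33 : ContDiffOn ℝ 1 (d3 (d3 Pt)) Dset := contDiffOn_d3 hDo P3 (by norm_num)
  have P0' : ContDiffOn ℝ 1 Pt Dset := P0.of_le (by norm_num)
  have P1' : ContDiffOn ℝ 1 (d1 Pt) Dset := P1.of_le (by norm_num)
  have P3' : ContDiffOn ℝ 1 (d3 Pt) Dset := P3.of_le (by norm_num)
  have F0' : ContDiffOn ℝ 1 F Dset := F0.of_le (by norm_num)
  have A0' : ContDiffOn ℝ 1 A Dset := A0.of_le (by norm_num)
  have u0' : ContDiffOn ℝ 1 u Dset := u0.of_le (by norm_num)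
  have hne : ∀ p ∈ Dset, Pt p ≠ 0 := fun p hp => hPtne p (hDO hp)
  have hD0ne : ∀ p ∈ Dset, D₀ p ≠ 0 := by
    intro p hp; rw [hD₀]; exact hC p (hDDcl hp)
  have hD0c : ContDiffOn ℝ 1 D₀ Dset := by
    rw [hD₀]; exact (P1'.pow 2).add (P3'.pow 2)
  have hYac : ContDiffOn ℝ 1 RHYa Dset := by
    rw [hRHYa]
    exact ((contDiffOn_const.mul (P11.sub P33)).add (P0'.mul ((F1.pow 2).sub (F3.pow 2)))).sub
      ((((contDiffOn_const.mul F0').exp).div (contDiffOn_const.mul P0')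
        (fun p hp => mul_ne_zero four_ne_zero (hne p hp))).mul ((A1.pow 2).sub (A3.pow 2)))
  have hYbc : ContDiffOn ℝ 1 RHYb Dset := by
    rw [hRHYb]
    exact (P13.add (((contDiffOn_const.mul P0').mul F1).mul F3)).sub
      ((((contDiffOn_const.mul F0').exp).div (contDiffOn_const.mul P0')
        (fun p hp => mul_ne_zero two_ne_zero (hne p hp))).mul (A1.mul A3))
  have hX1c : ContDiffOn ℝ 1 Kt1 Dset := by
    rw [hKt1]
    exact (hD0c.inv hD0ne).mul ((P1'.mul hYac).add (P3'.mul hYbc))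
  have hX3c : ContDiffOn ℝ 1 Kt3 Dset := by
    rw [hKt3]
    exact (hD0c.inv hD0ne).mul ((P3'.neg.mul hYac).add (P1'.mul hYbc))
  have hrelA : ∀ p ∈ Dset, d1 Pt p * Kt1 p - d3 Pt p * Kt3 p = RHYa p := by
    intro p hp
    have h := hD0ne p hp
    have h2 : D₀ p = d1 Pt p ^ 2 + d3 Pt p ^ 2 := by rw [hD₀]
    rw [hKt1, hKt3]
    simp only
    field_simp
    rw [h2]; ring
  have hrelB : ∀ p ∈ Dset, d3 Pt p * Kt1 p + d1 Pt p * Kt3 p = RHYb p := by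
    intro p hp
    have h := hD0ne p hp
    have h2 : D₀ p = d1 Pt p ^ 2 + d3 Pt p ^ 2 := by rw [hD₀]
    rw [hKt1, hKt3]
    simp only
    field_simp
    rw [h2]; ring
  refine quad_lemma R Dset hDset Kt1 Kt3 K
    (fun p => -((d1 (d1 Pt) p + d3 (d3 Pt) p) * d1 Pt p) / D₀ p) KO hX1c hX3c
    (((P11.continuousOn.add P33.continuousOn).mul P1.continuousOn).neg.div hD0c.continuousOn hD0ne)
    (fun p hp => by rw [← hfix p hp, hKtilde p]) ?_
  intro p hp k hk1 hk3
  have hpO := hDO hp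
  have ev1 : ∀ᶠ t in nhds p.1, (t, p.2) ∈ Dset :=
    (hDo.preimage (f := fun t : ℝ => (t, p.2)) (by fun_prop)).mem_nhds hp
  have ev3 : ∀ᶠ t in nhds p.2, (p.1, t) ∈ Dset :=
    (hDo.preimage (f := fun t : ℝ => (p.1, t)) (by fun_prop)).mem_nhds hp
  have L1 : ∀ {f : ℝ × ℝ → ℝ}, ContDiffOn ℝ 1 f Dset →
      HasDerivAt (fun t => f (t, p.2)) (d1 f p) p.1 := fun hf =>
    hasDeriv_line1 (contDiffOn_diffAt hDo hf (by norm_num) hp)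
  have L3 : ∀ {f : ℝ × ℝ → ℝ}, ContDiffOn ℝ 1 f Dset →
      HasDerivAt (fun t => f (p.1, t)) (d3 f p) p.2 := fun hf =>
    hasDeriv_line3 (contDiffOn_diffAt hDo hf (by norm_num) hp)
  have sF : d3 (d1 F) p = d1 (d3 F) p := d_symm hDo F0 hp
  have sA : d3 (d1 A) p = d1 (d3 A) p := d_symm hDo A0 hp
  have sP : d3 (d1 Pt) p = d1 (d3 Pt) p := d_symm hDo (P0.of_le (by norm_num)) hp
  have sP1 : d3 (d1 (d1 Pt)) p = d1 (d3 (d1 Pt)) p := d_symm hDo P1 hp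
  have sP3 : d3 (d1 (d3 Pt)) p = d1 (d3 (d3 Pt)) p := d_symm hDo P3 hp
  have sP13 : d1 (d3 (d1 Pt)) p = d1 (d1 (d3 Pt)) p := by
    have : d3 (d1 Pt) =ᶠ[nhds p] d1 (d3 Pt) := by
      filter_upwards [hDo.mem_nhds hp] with q hq
      exact d_symm hDo (P0.of_le (by norm_num)) hq
    change fderiv ℝ (d3 (d1 Pt)) p (1, 0) = fderiv ℝ (d1 (d3 Pt)) p (1, 0)
    rw [this.fderiv_eq]
  have hBern' : ∀ p ∈ {x ∈ O | 0 < u x}, ∀ q ∈ connectedComponentIn {x ∈ O | 0 < u x} p,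
      u q / c ^ 2 + Real.log (E q) / 2 = u p / c ^ 2 + Real.log (E p) / 2 := by
    rw [hG] at hBern; exact hBern
  obtain ⟨Q1, hQ1, hQ1'⟩ := matter_lemma c κ R₁ R₀ hc hR₁ hR₁R₀ O hO F A Pt K ρ P Ω u
    hu.continuousOn E hE hEpos rf pf hrf0 hpf0 hpfd hρu hPu hBern' Ωc hΩc' hvac
    (fun t => (t, p.2)) p.1 p rfl hpO (by fun_prop) _ _ _ _ _
    (L1 F0') (L1 A0') (L1 P0') (L1 u0') hk1
  obtain ⟨Q3, hQ3, hQ3'⟩ := matter_lemma c κ R₁ R₀ hc hR₁ hR₁R₀ O hO F A Pt K ρ P Ω u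
    hu.continuousOn E hE hEpos rf pf hrf0 hpf0 hpfd hρu hPu hBern' Ωc hΩc' hvac
    (fun t => (p.1, t)) p.2 p rfl hpO (by fun_prop) _ _ _ _ _
    (L3 F0') (L3 A0') (L3 P0') (L3 u0') hk3
  have hS1 := ((L1 P11).add (L1 P33)).unique (hQ1.congr_of_eventuallyEq (by
    filter_upwards [ev1] with t ht
    exact hN9c _ (hDO ht)))
  have hS3 := ((L3 P11).add (L3 P33)).unique (hQ3.congr_of_eventuallyEq (by
    filter_upwards [ev3] with t ht
    exact hN9c _ (hDO ht)))
  have he4 : exp (4 * F p) = exp (2 * F p) ^ 2 := by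
    rw [← Real.exp_nat_mul]; congr 1; push_cast; ring
  have hna := hN9a p hpO
  have hnb := hN9b p hpO
  have hnc := hN9c p hpO
  have hεp : ε p = c ^ 2 * ρ p := by rw [hε]
  rw [he4, Real.exp_neg, ← div_pow, hεp] at hna
  rw [Real.exp_neg, hεp] at hnb
  have hEne := (hEpos p hpO).ne'
  have hT1 := alg_lemma κ (Ω p / c) (exp (2 * F p)) (1 + Ω p * A p / c)
    (exp (2 * (-F p + K p))) (c ^ 2 * ρ p) (P p) (E p) (Pt p) (d1 Pt p) (d3 Pt p)
    (d1 (d1 (d1 Pt)) p) (d1 (d3 (d3 Pt)) p) (d1 F p) (d3 F p) (d1 (d1 F) p) (d1 (d3 F) p)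
    (d3 (d3 F) p) (d1 A p) (d3 A p) (d1 (d1 A) p) (d1 (d3 A) p) (d3 (d3 A) p) Q1 (Kt1 p)
    (d1 (d1 Pt) p + d3 (d3 Pt) p) (exp_pos _).ne' (hne p hp) hEne hna hnb hnc hS1 hQ1'
  have hT3 := alg_lemma κ (Ω p / c) (exp (2 * F p)) (1 + Ω p * A p / c)
    (exp (2 * (-F p + K p))) (c ^ 2 * ρ p) (P p) (E p) (Pt p) (d3 Pt p) (d1 Pt p)
    (d3 (d3 (d3 Pt)) p) (d3 (d1 (d1 Pt)) p) (d3 F p) (d1 F p) (d3 (d3 F) p) (d1 (d3 F) p)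
    (d1 (d1 F) p) (d3 A p) (d1 A p) (d3 (d3 A) p) (d1 (d3 A) p) (d1 (d1 A) p) Q3 k
    (d1 (d1 Pt) p + d3 (d3 Pt) p) (exp_pos _).ne' (hne p hp) hEne
    (by linear_combination hna) (by linear_combination hnb) hnc
    (by linear_combination hS3) hQ3'
  have hnp := hne p hp
  have hYa1 := ya_deriv (L1 P11) (L1 P33) (L1 P0') (L1 F0') (L1 F1) (L1 F3) (L1 A1) (L1 A3) hnp
  have hYa3 := ya_deriv (L3 P11) (L3 P33) (L3 P0') (L3 F0') (L3 F1) (L3 F3) (L3 A1) (L3 A3) hnp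
  have hYb1 := yb_deriv (L1 P13) (L1 P0') (L1 F0') (L1 F1) (L1 F3) (L1 A1) (L1 A3) hnp
  have hYb3 := yb_deriv (L3 P13) (L3 P0') (L3 F0') (L3 F1) (L3 F3) (L3 A1) (L3 A3) hnp
  have e1 := (((L1 P1').mul (L1 hX1c)).sub ((L1 P3').mul (L1 hX3c))).unique
    (hYa1.congr_of_eventuallyEq (by
      filter_upwards [ev1] with t ht
      have := hrelA _ ht
      rw [hRHYa] at this
      exact this))
  have e2 := (((L3 P1').mul (L3 hX1c)).sub ((L3 P3').mul (L3 hX3c))).unique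
    (hYa3.congr_of_eventuallyEq (by
      filter_upwards [ev3] with t ht
      have := hrelA _ ht
      rw [hRHYa] at this
      exact this))
  have e3 := (((L1 P3').mul (L1 hX1c)).add ((L1 P1').mul (L1 hX3c))).unique
    (hYb1.congr_of_eventuallyEq (by
      filter_upwards [ev1] with t ht
      have := hrelB _ ht
      rw [hRHYb] at this
      exact this))
  have e4 := (((L3 P3').mul (L3 hX1c)).add ((L3 P1').mul (L3 hX3c))).unique
    (hYb3.congr_of_eventuallyEq (by
      filter_upwards [ev3] with t ht
      have := hrelB _ ht
      rw [hRHYb] at this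
      exact this))
  simp only [Prod.mk.eta, sF, sA, sP, sP3] at e1 e2 e3 e4
  rw [← sP13, ← sP1] at e3
  have hD0p : D₀ p = d1 Pt p ^ 2 + d3 Pt p ^ 2 := by rw [hD₀]
  have hD0n := hD0ne p hp
  rw [div_mul_eq_mul_div, eq_div_iff hD0n, hD0p]
  linear_combination d3 Pt p * (e1 + e4 + hT1) - d1 Pt p * (e3 - e2 + hT3)
end

section
/- (Kelvin transform and the Laplacian.) Let n ≥ 3, Ξ₀ > 0, and let U ⊆ ℝⁿ∖{0} be open with f : U → ℝ of class C². Let ι(ξ) := (Ξ₀/|ξ|)²·ξ (so ι is an involution of ℝⁿ∖{0}), let U* = ι(U), and define the Kelvin transform f⋆ : U* → ℝ by f⋆(ξ*) = (Ξ₀/|ξ*|)^{n−2}·f((Ξ₀/|ξ*|)²·ξ*). Then f⋆ is C² on U*, and for every ξ ∈ U, with ξ* = ι(ξ): Δf⋆(ξ*) = (|ξ|/Ξ₀)^{n+2}·Δf(ξ). -/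
open Real Metric

noncomputable section

/-- The Laplacian of `f : ℝⁿ → ℝ`, as the sum of the second directional derivatives
along the standard orthonormal basis. -/
def lap (n : ℕ) (f : EuclideanSpace ℝ (Fin n) → ℝ) (x : EuclideanSpace ℝ (Fin n)) : ℝ :=
  ∑ i : Fin n, fderiv ℝ (fun y => fderiv ℝ f y (EuclideanSpace.single i 1)) x
    (EuclideanSpace.single i 1)

/-- The Kelvin inversion `ι(ξ) = (Ξ₀/|ξ|)²·ξ` of the coordinates. -/
def kelvinPt (n : ℕ) (Ξ₀ : ℝ) (ξ : EuclideanSpace ℝ (Fin n)) : EuclideanSpace ℝ (Fin n) :=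
  ((Ξ₀ / ‖ξ‖) ^ 2 : ℝ) • ξ

/-- The Kelvin transform `f⋆(ξ*) = (Ξ₀/|ξ*|)^{n−2}·f((Ξ₀/|ξ*|)²·ξ*)` of a function. -/
def kelvin (n : ℕ) (Ξ₀ : ℝ) (f : EuclideanSpace ℝ (Fin n) → ℝ)
    (ξs : EuclideanSpace ℝ (Fin n)) : ℝ :=
  (Ξ₀ / ‖ξs‖) ^ (n - 2) * f (kelvinPt n Ξ₀ ξs)

section KelvinAux
variable {n : ℕ}
local notation "E" => EuclideanSpace ℝ (Fin n)

lemma kaux_line (y e : E) : HasDerivAt (fun t : ℝ => y + t • e) e 0 := by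
  simpa using ((hasDerivAt_id (0:ℝ)).smul_const e).const_add y

lemma kaux_sq (y e : E) :
    HasDerivAt (fun t : ℝ => ‖y + t • e‖ ^ 2) (2 * inner ℝ y e) 0 := by
  simpa using (kaux_line y e).norm_sq

lemma kaux_inv (y e : E) (hy : y ≠ 0) :
    HasDerivAt (fun t : ℝ => (‖y + t • e‖ ^ 2)⁻¹)
      (-2 * inner ℝ y e * ((‖y‖ ^ 2)⁻¹) ^ 2) 0 := by
  have h := (kaux_sq y e).inv (by simpa using hy)
  refine HasDerivAt.congr_deriv h ?_
  have : ‖y‖ ≠ 0 := by simpa using hy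
  simp
  field_simp

lemma kaux_norm (y e : E) (hy : y ≠ 0) :
    HasDerivAt (fun t : ℝ => ‖y + t • e‖) (inner ℝ y e / ‖y‖) 0 := by
  have h := (kaux_sq y e).sqrt (by simpa using hy)
  have h2 : (fun t : ℝ => ‖y + t • e‖) = fun t : ℝ => √(‖y + t • e‖ ^ 2) := by
    funext t; rw [Real.sqrt_sq (norm_nonneg _)]
  rw [h2]
  refine HasDerivAt.congr_deriv h ?_
  have : ‖y‖ ≠ 0 := by simpa using hy
  simp
  field_simp

lemma kaux_pow (a : ℝ) (m : ℕ) (y e : E) (hy : y ≠ 0) :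
    HasDerivAt (fun t : ℝ => (a / ‖y + t • e‖) ^ m)
      ((a / ‖y‖) ^ m * (-(m : ℝ) * inner ℝ y e * (‖y‖ ^ 2)⁻¹)) 0 := by
  have hr : ‖y‖ ≠ 0 := by simpa using hy
  have h := (((hasDerivAt_const (0:ℝ) a).div (kaux_norm y e hy) (by simpa using hy))).pow m
  refine HasDerivAt.congr_deriv h ?_
  rcases m with _ | m
  · simp
  · simp [pow_succ (a / ‖y‖) m]
    field_simp
    ring

lemma kaux_pt (a : ℝ) (y : E) : kelvinPt n a y = (a ^ 2 * (‖y‖ ^ 2)⁻¹) • y := by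
  rw [kelvinPt, div_pow, div_eq_mul_inv]

lemma kaux_K (a : ℝ) (y e : E) (hy : y ≠ 0) :
    HasDerivAt (fun t : ℝ => kelvinPt n a (y + t • e))
      ((a ^ 2 * (‖y‖ ^ 2)⁻¹) • (e - (2 * inner ℝ y e * (‖y‖ ^ 2)⁻¹) • y)) 0 := by
  have h := ((kaux_inv y e hy).const_mul (a ^ 2)).smul (kaux_line y e)
  simp only [kaux_pt]
  refine HasDerivAt.congr_deriv h ?_
  simp
  module

lemma kaux_invol (a : ℝ) (ha : 0 < a) (y : E) (hy : y ≠ 0) :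
    kelvinPt n a (kelvinPt n a y) = y := by
  have hr : ‖y‖ ≠ 0 := by simpa using hy
  simp only [kaux_pt, norm_smul, smul_smul]
  simp
  convert one_smul ℝ y using 2
  field_simp

lemma kaux_ne (a : ℝ) (ha : 0 < a) (y : E) (hy : y ≠ 0) : kelvinPt n a y ≠ 0 := by
  have hr : ‖y‖ ≠ 0 := by simpa using hy
  rw [kaux_pt]
  simp [ha.ne', hy]

lemma kaux_norm_pt (a : ℝ) (ha : 0 < a) (y : E) (hy : y ≠ 0) :
    a / ‖kelvinPt n a y‖ = ‖y‖ / a := by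
  have hr : ‖y‖ ≠ 0 := by simpa using hy
  simp only [kaux_pt, norm_smul]
  simp
  field_simp

lemma kaux_cd (a : ℝ) (y : E) (hy : y ≠ 0) : ContDiffAt ℝ 2 (kelvinPt n a) y := by
  have hr : ‖y‖ ≠ 0 := by simpa using hy
  unfold kelvinPt
  exact ((contDiffAt_const.div (contDiffAt_norm ℝ hy) hr).pow 2).smul contDiffAt_id

lemma kaux_cdk (a : ℝ) (f : E → ℝ) (y : E) (hy : y ≠ 0)
    (hf : ContDiffAt ℝ 2 f (kelvinPt n a y)) : ContDiffAt ℝ 2 (kelvin n a f) y := by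
  have hr : ‖y‖ ≠ 0 := by simpa using hy
  unfold kelvin
  exact ((contDiffAt_const.div (contDiffAt_norm ℝ hy) hr).pow _).mul (hf.comp y (kaux_cd a y hy))

/-- a directional derivative computed along a line -/
lemma kaux_fd (g : E → ℝ) (y e : E) (d : ℝ) (hg : DifferentiableAt ℝ g y)
    (h : HasDerivAt (fun t : ℝ => g (y + t • e)) d 0) : fderiv ℝ g y e = d := by
  have h1 : HasLineDerivAt ℝ g d y e := h
  rw [← hg.lineDeriv_eq_fderiv, h1.lineDeriv]

lemma kaux_first (a : ℝ) (f : E → ℝ) (y e : E) (hy : y ≠ 0)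
    (hf : ContDiffAt ℝ 2 f (kelvinPt n a y)) :
    fderiv ℝ (kelvin n a f) y e = (a / ‖y‖) ^ (n - 2) *
      (-((n - 2 : ℕ) : ℝ) * inner ℝ y e * (‖y‖ ^ 2)⁻¹ * f (kelvinPt n a y)
        + a ^ 2 * (‖y‖ ^ 2)⁻¹ * fderiv ℝ f (kelvinPt n a y)
          (e - (2 * inner ℝ y e * (‖y‖ ^ 2)⁻¹) • y)) := by
  apply kaux_fd _ _ _ _ ((kaux_cdk a f y hy hf).differentiableAt (by norm_num))
  have hfd : HasFDerivAt f (fderiv ℝ f (kelvinPt n a y)) (kelvinPt n a (y + (0:ℝ) • e)) := by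
    simpa using (hf.differentiableAt (by norm_num)).hasFDerivAt
  have h := (kaux_pow a (n - 2) y e hy).mul (hfd.comp_hasDerivAt (0:ℝ) (kaux_K a y e hy))
  unfold kelvin
  refine HasDerivAt.congr_deriv h ?_
  simp
  ring

lemma kaux_second (a : ℝ) (f : E → ℝ) (y e : E) (hy : y ≠ 0)
    (hf : ContDiffAt ℝ 2 f (kelvinPt n a y)) (m s c p F : ℝ) (G : E →L[ℝ] ℝ) (w : E)
    (hm : m = ((n - 2 : ℕ) : ℝ)) (hs : s = (‖y‖ ^ 2)⁻¹) (hc : c = inner ℝ y e)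
    (hp : p = (a / ‖y‖) ^ (n - 2)) (hF : F = f (kelvinPt n a y))
    (hG : G = fderiv ℝ f (kelvinPt n a y)) (hw : w = e - (2 * c * s) • y) :
    fderiv ℝ (fun z => fderiv ℝ (kelvin n a f) z e) y e =
      p * (-m * c * s) * (-m * c * s * F + a ^ 2 * s * G w) +
      p * (-m * inner ℝ e e * s * F + 2 * m * c ^ 2 * s ^ 2 * F - m * c * s * (a ^ 2 * s * G w)
        - 2 * a ^ 2 * c * s ^ 2 * G w
        + a ^ 2 * s * (a ^ 2 * s * fderiv ℝ (fderiv ℝ f) (kelvinPt n a y) w w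
          + (-2 * s * inner ℝ e e * G y - 2 * c * s * G e + 4 * c ^ 2 * s ^ 2 * G y))) := by
  have hk := kaux_cdk a f y hy hf
  have hdk : DifferentiableAt ℝ (fun z => fderiv ℝ (kelvin n a f) z e) y :=
    ((hk.fderiv_right (m := 1) (by norm_num)).differentiableAt (by norm_num)).clm_apply
      (differentiableAt_const _)
  apply kaux_fd _ _ _ _ hdk
  have hev : ∀ᶠ z in nhds y, z ≠ 0 ∧ ContDiffAt ℝ 2 f (kelvinPt n a z) :=
    Filter.Eventually.and (isOpen_ne.mem_nhds hy)
      ((kaux_cd a y hy).continuousAt.eventually (hf.eventually (by simp)))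
  have hlc : Filter.Tendsto (fun t : ℝ => y + t • e) (nhds 0) (nhds y) := by
    have := (kaux_line y e).continuousAt
    simpa [ContinuousAt] using this
  have hfd : HasFDerivAt f (fderiv ℝ f (kelvinPt n a y)) (kelvinPt n a (y + (0:ℝ) • e)) := by
    simpa using (hf.differentiableAt (by norm_num)).hasFDerivAt
  have hGd : HasFDerivAt (fderiv ℝ f) (fderiv ℝ (fderiv ℝ f) (kelvinPt n a y))
      (kelvinPt n a (y + (0:ℝ) • e)) := by
    simpa using ((hf.fderiv_right (m := 1) (by norm_num)).differentiableAt
      (by norm_num)).hasFDerivAt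
  have hK := kaux_K a y e hy
  have hfK := hfd.comp_hasDerivAt (0:ℝ) hK
  have hGK := hGd.comp_hasDerivAt (0:ℝ) hK
  have hL := kaux_line y e
  have hI : HasDerivAt (fun t : ℝ => inner ℝ (y + t • e) e) (inner ℝ e e) 0 := by
    simpa using hL.inner ℝ (hasDerivAt_const (0:ℝ) e)
  have hS := kaux_inv y e hy
  have hW := (((hI.const_mul 2).mul hS).smul hL).const_sub e
  have hT := (((hI.const_mul (-((n - 2 : ℕ) : ℝ))).mul hS).mul hfK).add
    ((hS.const_mul (a ^ 2)).mul (hGK.clm_apply hW))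
  have h := (kaux_pow a (n - 2) y e hy).mul hT
  refine HasDerivAt.congr_of_eventuallyEq (f := _) ?_ ((hlc.eventually hev).mono fun t ht =>
    kaux_first a f (y + t • e) e ht.1 ht.2)
  refine HasDerivAt.congr_deriv h ?_
  subst hw hG hF hp hc hs hm
  simp [-mul_eq_mul_left_iff]
  ring

lemma kaux_basis (y : E) : ∑ i, y i • (EuclideanSpace.single i (1:ℝ) : E) = y := by
  ext j
  simp [Finset.sum_apply, Pi.single_apply]

lemma kaux_lap (hn : 3 ≤ n) (a : ℝ) (f : E → ℝ) (y : E) (hy : y ≠ 0)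
    (hf : ContDiffAt ℝ 2 f (kelvinPt n a y)) :
    lap n (kelvin n a f) y = (a / ‖y‖) ^ (n + 2) * lap n f (kelvinPt n a y) := by
  have hr : ‖y‖ ≠ 0 := by simpa using hy
  set G := fderiv ℝ f (kelvinPt n a y) with hG
  set B := fderiv ℝ (fderiv ℝ f) (kelvinPt n a y) with hB
  set s := (‖y‖ ^ 2)⁻¹ with hs
  set F := f (kelvinPt n a y) with hF
  set p := (a / ‖y‖) ^ (n - 2) with hp
  have hB2 : lap n f (kelvinPt n a y) = ∑ i, B (EuclideanSpace.single i 1)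
      (EuclideanSpace.single i 1) := by
    unfold lap
    refine Finset.sum_congr rfl fun i _ => ?_
    have hd : DifferentiableAt ℝ (fderiv ℝ f) (kelvinPt n a y) :=
      (hf.fderiv_right (m := 1) (by norm_num)).differentiableAt (by norm_num)
    rw [fderiv_clm_apply hd (differentiableAt_const _)]
    simp [hB]
  have hpw : (a / ‖y‖) ^ (n + 2) = p * (a ^ 4 * s ^ 2) := by
    obtain ⟨k, rfl⟩ := Nat.exists_eq_add_of_le hn
    have : 3 + k - 2 = k + 1 := by omega
    rw [hp, this, hs, div_pow, div_pow]
    field_simp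
    ring
  obtain ⟨m, hm⟩ : ∃ m : ℝ, m = ((n - 2 : ℕ) : ℝ) := ⟨_, rfl⟩
  have hmn : (n : ℝ) = m + 2 := by
    rw [hm, Nat.cast_sub (by omega)]; norm_num
  have hyy : ∑ i, y i ^ 2 = ‖y‖ ^ 2 := by
    rw [EuclideanSpace.norm_sq_eq]; simp
  have hys : (∑ i, y i ^ 2) * s = 1 := by
    rw [hyy, hs]; field_simp
  have hGy : ∑ i, y i * G (EuclideanSpace.single i 1) = G y := by
    conv_rhs => rw [← kaux_basis y]
    simp
  have hB1 : ∑ i, y i * B (EuclideanSpace.single i 1) y = B y y := by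
    have : B y = ∑ i, y i • B (EuclideanSpace.single i 1) := by
      conv_lhs => rw [← kaux_basis y]
      simp
    rw [this]; simp
  have hB3 : ∑ i, y i * B y (EuclideanSpace.single i 1) = B y y := by
    have h : ∀ T : E →L[ℝ] ℝ, ∑ i, y i * T (EuclideanSpace.single i 1) = T y := by
      intro T
      conv_rhs => rw [← kaux_basis y]
      simp
    exact h (B y)
  rw [hB2, hpw]
  have key : ∀ i : Fin n, fderiv ℝ (fun z => fderiv ℝ (kelvin n a f) z
      (EuclideanSpace.single i 1)) y (EuclideanSpace.single i 1) =
      p * (a ^ 4 * s ^ 2) * B (EuclideanSpace.single i 1) (EuclideanSpace.single i 1)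
      - 2 * p * a ^ 4 * s ^ 3 * (y i * B (EuclideanSpace.single i 1) y)
      - 2 * p * a ^ 4 * s ^ 3 * (y i * B y (EuclideanSpace.single i 1))
      + (4 * p * a ^ 4 * s ^ 4 * B y y + p * (m ^ 2 * s ^ 2 * F + 2 * m * s ^ 2 * F)
        + p * a ^ 2 * s ^ 3 * G y * (4 * m + 8)) * (y i ^ 2)
      + p * a ^ 2 * s ^ 2 * (-2 * m - 4) * (y i * G (EuclideanSpace.single i 1))
      + p * (- m * s * F - 2 * a ^ 2 * s ^ 2 * G y) := by
    intro i
    rw [kaux_second a f y (EuclideanSpace.single i 1) hy hf m s (y i) p F G _ hm hs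
      (by simp [EuclideanSpace.inner_single_right]) hp hF hG rfl]
    rw [← hB]
    simp
    ring
  unfold lap
  rw [Finset.sum_congr rfl fun i _ => key i]
  simp only [Finset.sum_add_distrib, Finset.sum_sub_distrib, ← Finset.mul_sum, hGy, hB1, hB3]
  simp only [Finset.sum_const, Finset.card_univ, Fintype.card_fin, nsmul_eq_mul, hmn]
  generalize (∑ i, y i ^ 2) = Q at hys
  linear_combination (4 * p * a ^ 4 * s ^ 3 * B y y + p * (m ^ 2 * s * F + 2 * m * s * F)
        + p * a ^ 2 * s ^ 2 * G y * (4 * m + 8)) * hys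

end KelvinAux

/-- **Kelvin transform and the Laplacian.**
If `U ⊆ ℝⁿ∖{0}` is open and `f` is `C²` on `U`, then the Kelvin transform `f⋆` is `C²`
on `U* = ι(U)` and `Δf⋆(ξ*) = (|ξ|/Ξ₀)^{n+2}·Δf(ξ)` for all `ξ ∈ U`. -/
theorem stmt_8 (n : ℕ) (hn : 3 ≤ n) (Ξ₀ : ℝ) (hΞ₀ : 0 < Ξ₀)
    (U : Set (EuclideanSpace ℝ (Fin n))) (hU : IsOpen U) (hU0 : (0 : EuclideanSpace ℝ (Fin n)) ∉ U)
    (f : EuclideanSpace ℝ (Fin n) → ℝ) (hf : ContDiffOn ℝ 2 f U) :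
    ContDiffOn ℝ 2 (kelvin n Ξ₀ f) (kelvinPt n Ξ₀ '' U) ∧
    ∀ ξ ∈ U, lap n (kelvin n Ξ₀ f) (kelvinPt n Ξ₀ ξ)
      = (‖ξ‖ / Ξ₀) ^ (n + 2) * lap n f ξ := by
  have hne : ∀ ξ ∈ U, ξ ≠ 0 := fun ξ h h0 => hU0 (h0 ▸ h)
  have hcd : ∀ ξ ∈ U, ContDiffAt ℝ 2 f (kelvinPt n Ξ₀ (kelvinPt n Ξ₀ ξ)) := fun ξ h => by
    rw [kaux_invol Ξ₀ hΞ₀ ξ (hne ξ h)]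
    exact hf.contDiffAt (hU.mem_nhds h)
  refine ⟨?_, fun ξ h => ?_⟩
  · rintro _ ⟨ξ, h, rfl⟩
    exact (kaux_cdk Ξ₀ f _ (kaux_ne Ξ₀ hΞ₀ ξ (hne ξ h)) (hcd ξ h)).contDiffWithinAt
  · rw [kaux_lap hn Ξ₀ f _ (kaux_ne Ξ₀ hΞ₀ ξ (hne ξ h)) (hcd ξ h),
      kaux_norm_pt Ξ₀ hΞ₀ ξ (hne ξ h), kaux_invol Ξ₀ hΞ₀ ξ (hne ξ h)]

end
end

section
/- (Pointwise Taylor estimate for the positive-part power, underlying the estimates on H_ρ(w).) Let ν > 1 and define g : ℝ → ℝ by g(u) = (max(u,0))^ν. Then for every a₀ > 0 there is a constant C ≥ 0, depending only on ν and a₀, such that for all a, h ∈ ℝ with |a| ≤ a₀ and |h| ≤ a₀: |g(a+h) − g(a) − ν·(max(a,0))^{ν−1}·h| ≤ C·|h|^{min(ν,2)}. -/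
lemma holder_aux (ν : ℝ) (hν : 1 < ν) (M : ℝ) (hM : 0 < M) :
    ∃ K : ℝ, 0 ≤ K ∧ ∀ x ∈ Set.Icc 0 M, ∀ y ∈ Set.Icc 0 M,
      |x ^ (ν - 1) - y ^ (ν - 1)| ≤ K * |x - y| ^ (min ν 2 - 1) := by
  rcases le_total ν 2 with h2 | h2
  · refine ⟨1, zero_le_one, ?_⟩
    have key : ∀ x y : ℝ, 0 ≤ y → y ≤ x →
        |x ^ (ν - 1) - y ^ (ν - 1)| ≤ 1 * |x - y| ^ (min ν 2 - 1) := by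
      intro x y hy hxy
      rw [min_eq_left h2, one_mul, abs_of_nonneg (sub_nonneg.2 hxy), abs_of_nonneg
        (sub_nonneg.2 (Real.rpow_le_rpow hy hxy (by linarith)))]
      have := Real.rpow_add_le_add_rpow (sub_nonneg.2 hxy) hy (p := ν - 1) (by linarith)
        (by linarith)
      rw [sub_add_cancel] at this
      linarith
    intro x hx y hy
    rcases le_total y x with h | h
    · exact key x y hy.1 h
    · rw [abs_sub_comm, abs_sub_comm x y]
      exact key y x hx.1 h
  · refine ⟨(ν - 1) * M ^ (ν - 1 - 1), ?_, ?_⟩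
    · have : 0 ≤ ν - 1 := by linarith
      positivity
    intro x hx y hy
    have e : min ν 2 - 1 = (1 : ℝ) := by rw [min_eq_right h2]; norm_num
    rw [e, Real.rpow_one]
    have := (convex_Icc (0 : ℝ) M).norm_image_sub_le_of_norm_hasDerivWithin_le
      (f := fun u : ℝ => u ^ (ν - 1)) (f' := fun u => (ν - 1) * u ^ (ν - 1 - 1))
      (C := (ν - 1) * M ^ (ν - 1 - 1))
      (fun u _ => (Real.hasDerivAt_rpow_const (Or.inr (by linarith))).hasDerivWithinAt)
      (fun u hu => by
        have h0 : 0 ≤ ν - 1 := by linarith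
        have h1 := Real.rpow_nonneg hu.1 (ν - 1 - 1)
        rw [Real.norm_eq_abs, abs_of_nonneg (by positivity)]
        exact mul_le_mul_of_nonneg_left
          (Real.rpow_le_rpow hu.1 hu.2 (by linarith)) h0) hy hx
    simpa [Real.norm_eq_abs] using this

/-- **Pointwise Taylor estimate for the positive-part power.**
For `ν > 1` and `g u = (max u 0)^ν` (real power, with `0^{ν−1} = 0`), for every `a₀ > 0`
there is `C ≥ 0` depending only on `ν, a₀` such that for all `|a| ≤ a₀`, `|h| ≤ a₀`,
`|g (a+h) − g a − ν (max a 0)^{ν−1} h| ≤ C |h|^{min ν 2}`. -/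
theorem stmt_14 (ν : ℝ) (hν : 1 < ν) (a₀ : ℝ) (ha₀ : 0 < a₀) :
    ∃ C : ℝ, 0 ≤ C ∧ ∀ a h : ℝ, |a| ≤ a₀ → |h| ≤ a₀ →
      |(max (a + h) 0) ^ ν - (max a 0) ^ ν - ν * (max a 0) ^ (ν - 1) * h|
        ≤ C * |h| ^ (min ν 2) := by
  obtain ⟨K, hK, H⟩ := holder_aux ν hν (2 * a₀) (by linarith)
  refine ⟨2 * (ν * K), by positivity, ?_⟩
  intro a h ha hh
  have hs : 0 < min ν 2 - 1 := by
    have : 1 < min ν 2 := lt_min hν (by norm_num)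
    linarith
  have hpow : |h| ^ (min ν 2) = |h| ^ (min ν 2 - 1) * |h| := by
    conv_lhs => rw [show min ν 2 = (min ν 2 - 1) + 1 by ring]
    rw [Real.rpow_add_of_nonneg (abs_nonneg h) hs.le zero_le_one, Real.rpow_one]
  have hA : max a 0 ∈ Set.Icc 0 (2 * a₀) :=
    ⟨le_max_right _ _, max_le (by linarith [le_abs_self a]) (by linarith)⟩
  have hB : max (a + h) 0 ∈ Set.Icc 0 (2 * a₀) :=
    ⟨le_max_right _ _, max_le (by linarith [le_abs_self a, le_abs_self h]) (by linarith)⟩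
  have hBA : |max (a + h) 0 - max a 0| ≤ |h| := by
    have := abs_max_sub_max_le_abs (a + h) a 0
    simpa using this
  -- second part
  have part2 : |ν * (max a 0) ^ (ν - 1) * (h - (max (a + h) 0 - max a 0))|
      ≤ ν * K * |h| ^ (min ν 2) := by
    have hnn : 0 ≤ ν * K * |h| ^ (min ν 2) := by positivity
    rcases le_total a 0 with h0 | h0
    · rw [max_eq_right h0, Real.zero_rpow (by linarith)]
      simpa using hnn
    · rcases le_total 0 (a + h) with h1 | h1
      · rw [max_eq_left h0, max_eq_left h1]
        simpa using hnn
      · have h3 := H _ hA 0 ⟨le_rfl, by linarith⟩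
        rw [max_eq_left h0] at h3
        rw [max_eq_left h0, max_eq_right h1, abs_mul, abs_mul, abs_of_pos (by linarith : 0 < ν),
          hpow]
        rw [Real.zero_rpow (by linarith), sub_zero, sub_zero] at h3
        have hle : |a| ≤ |h| := by
          rw [abs_of_nonneg h0, abs_of_nonpos (by linarith)]; linarith
        have h4 : |h - (0 - a)| ≤ |h| := by
          rw [abs_of_nonpos (by linarith), abs_of_nonpos (by linarith)]; linarith
        have h5 : |a| ^ (min ν 2 - 1) ≤ |h| ^ (min ν 2 - 1) :=
          Real.rpow_le_rpow (abs_nonneg _) hle hs.le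
        calc ν * |a ^ (ν - 1)| * |h - (0 - a)|
            ≤ ν * (K * |h| ^ (min ν 2 - 1)) * |h| := by
              gcongr
              exact h3.trans (by gcongr)
          _ = _ := by ring
  have part1 : |(max (a + h) 0) ^ ν - (max a 0) ^ ν
      - ν * (max a 0) ^ (ν - 1) * (max (a + h) 0 - max a 0)| ≤ ν * K * |h| ^ (min ν 2) := by
    generalize max a 0 = A at *
    generalize max (a + h) 0 = B at *
    have hsub : Set.uIcc A B ⊆ Set.Icc 0 (2 * a₀) := by
      exact Set.uIcc_subset_Icc hA hB
    have := (convex_uIcc A B).norm_image_sub_le_of_norm_hasDerivWithin_le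
      (f := fun u : ℝ => u ^ ν - ν * A ^ (ν - 1) * u)
      (f' := fun u => ν * u ^ (ν - 1) - ν * A ^ (ν - 1))
      (C := ν * K * |h| ^ (min ν 2 - 1))
      (fun u _ => by
        have h1 := (Real.hasDerivAt_rpow_const (x := u) (p := ν) (Or.inr hν.le)).sub
          ((hasDerivAt_id u).const_mul (ν * A ^ (ν - 1)))
        simp only [mul_one] at h1
        exact h1.hasDerivWithinAt)
      (fun u hu => by
        rw [Real.norm_eq_abs, ← mul_sub, abs_mul, abs_of_pos (by linarith : 0 < ν), mul_assoc]
        have h1 := H u (hsub hu) A hA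
        have h2 : |u - A| ≤ |h| := (Set.abs_sub_left_of_mem_uIcc hu).trans hBA
        have h5 : |u - A| ^ (min ν 2 - 1) ≤ |h| ^ (min ν 2 - 1) :=
          Real.rpow_le_rpow (abs_nonneg _) h2 hs.le
        gcongr
        exact h1.trans (by gcongr)) Set.left_mem_uIcc Set.right_mem_uIcc
    rw [Real.norm_eq_abs, Real.norm_eq_abs] at this
    calc _ = |B ^ ν - ν * A ^ (ν - 1) * B - (A ^ ν - ν * A ^ (ν - 1) * A)| := by
            congr 1; ring
      _ ≤ _ := this
      _ ≤ ν * K * |h| ^ (min ν 2 - 1) * |h| := by gcongr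
      _ = _ := by rw [hpow]; ring
  calc _ = |((max (a + h) 0) ^ ν - (max a 0) ^ ν
      - ν * (max a 0) ^ (ν - 1) * (max (a + h) 0 - max a 0))
      - ν * (max a 0) ^ (ν - 1) * (h - (max (a + h) 0 - max a 0))| := by congr 1; ring
    _ ≤ _ := abs_sub _ _
    _ ≤ _ := add_le_add part1 part2
    _ = _ := by ring
end

section
/- (Lipschitz-type estimate for the Taylor remainder of the positive-part power, underlying the difference estimates on H_ρ(w₂) − H_ρ(w₁).) Let ν > 1 and define g : ℝ → ℝ by g(u) = (max(u,0))^ν, and for a, h ∈ ℝ define H(a,h) := g(a+h) − g(a) − ν·(max(a,0))^{ν−1}·h. Then for every a₀ > 0 there is a constant C ≥ 0, depending only on ν and a₀, such that for all a, h₁, h₂ ∈ ℝ with |a| ≤ a₀, |h₁| ≤ a₀ and |h₂| ≤ a₀: |H(a,h₂) − H(a,h₁)| ≤ C·(|h₁| + |h₂|)^{min(ν,2)−1}·|h₂ − h₁|. -/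
lemma aux_deriv (ν : ℝ) (hν : 1 < ν) (u : ℝ) :
    HasDerivAt (fun x : ℝ => (max x 0) ^ ν) (ν * (max u 0) ^ (ν - 1)) u := by
  rcases lt_trichotomy u 0 with h | h | h
  · have h1 : (fun x : ℝ => (max x 0) ^ ν) =ᶠ[nhds u] fun _ => (0 : ℝ) := by
      filter_upwards [Iio_mem_nhds h] with x hx
      rw [max_eq_right (le_of_lt hx), Real.zero_rpow (by linarith)]
    rw [max_eq_right h.le, Real.zero_rpow (by linarith), mul_zero]
    exact (hasDerivAt_const u (0 : ℝ)).congr_of_eventuallyEq h1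
  · subst h
    rw [max_self, Real.zero_rpow (by linarith), mul_zero]
    have hl : HasDerivWithinAt (fun x : ℝ => (max x 0) ^ ν) 0 (Set.Iic 0) 0 := by
      refine (hasDerivWithinAt_const (0 : ℝ) (Set.Iic 0) (0 : ℝ)).congr ?_ ?_
      · intro x hx
        rw [max_eq_right hx, Real.zero_rpow (by linarith)]
      · rw [max_self, Real.zero_rpow (by linarith)]
    have hr : HasDerivWithinAt (fun x : ℝ => (max x 0) ^ ν) 0 (Set.Ici 0) 0 := by
      have h2 := (Real.hasDerivAt_rpow_const (x := 0) (p := ν)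
        (Or.inr hν.le)).hasDerivWithinAt (s := Set.Ici 0)
      rw [Real.zero_rpow (by linarith), mul_zero] at h2
      refine h2.congr ?_ ?_
      · intro x hx
        rw [max_eq_left hx]
      · rw [max_self]
    have := hl.union hr
    rw [Set.Iic_union_Ici] at this
    exact hasDerivWithinAt_univ.mp this
  · have h1 : (fun x : ℝ => (max x 0) ^ ν) =ᶠ[nhds u] fun x => x ^ ν := by
      filter_upwards [Ioi_mem_nhds h] with x hx
      rw [max_eq_left (le_of_lt hx)]
    rw [max_eq_left h.le]
    exact (Real.hasDerivAt_rpow_const (Or.inl h.ne')).congr_of_eventuallyEq h1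

lemma aux_sub (p : ℝ) (hp : 0 < p) (hp1 : p ≤ 1) (x y : ℝ) (hy : 0 ≤ y) (hxy : y ≤ x) :
    |x ^ p - y ^ p| ≤ |x - y| ^ p := by
  have h1 := Real.rpow_le_rpow hy hxy hp.le
  rw [abs_of_nonneg (by linarith), abs_of_nonneg (by linarith)]
  have := NNReal.rpow_add_le_add_rpow ⟨y, hy⟩ ⟨x - y, by linarith⟩ hp.le hp1
  have h2 : (y + (x - y)) ^ p ≤ y ^ p + (x - y) ^ p := by exact_mod_cast this
  rw [add_sub_cancel] at h2
  linarith

lemma aux_holder (p : ℝ) (hp : 0 < p) (R : ℝ) (hR : 0 < R) :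
    ∃ K : ℝ, 0 ≤ K ∧ ∀ x y : ℝ, |x| ≤ R → |y| ≤ R →
      |(max x 0) ^ p - (max y 0) ^ p| ≤ K * |x - y| ^ (min p 1) := by
  have hmax : ∀ x y : ℝ, |max x 0 - max y 0| ≤ |x - y| := fun x y =>
    abs_max_sub_max_le_abs x y 0
  rcases le_total p 1 with h | h
  · refine ⟨1, zero_le_one, fun x y _ _ => ?_⟩
    rw [min_eq_left h, one_mul]
    refine le_trans ?_ (Real.rpow_le_rpow (abs_nonneg _) (hmax x y) hp.le)
    rcases le_total (max y 0) (max x 0) with h' | h'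
    · exact aux_sub p hp h _ _ (le_max_right _ _) h'
    · rw [abs_sub_comm, abs_sub_comm (max x 0)]
      exact aux_sub p hp h _ _ (le_max_right _ _) h'
  · refine ⟨p * R ^ (p - 1), by positivity, fun x y hx hy => ?_⟩
    rw [min_eq_right h, Real.rpow_one]
    refine le_trans ?_ (mul_le_mul_of_nonneg_left (hmax x y) (by positivity))
    have key := (convex_Icc (0 : ℝ) R).norm_image_sub_le_of_norm_hasDerivWithin_le
      (f := fun x : ℝ => x ^ p) (f' := fun x => p * x ^ (p - 1)) (C := p * R ^ (p - 1))
      (x := max y 0) (y := max x 0)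
      (fun z _ => (Real.hasDerivAt_rpow_const (Or.inr h)).hasDerivWithinAt)
      (fun z hz => by
        have := Real.rpow_nonneg hz.1 (p - 1)
        rw [Real.norm_of_nonneg (by positivity)]
        exact mul_le_mul_of_nonneg_left
          (Real.rpow_le_rpow hz.1 hz.2 (by linarith)) hp.le)
      ⟨le_max_right _ _, max_le (le_trans (le_abs_self _) hy) hR.le⟩
      ⟨le_max_right _ _, max_le (le_trans (le_abs_self _) hx) hR.le⟩
    simpa [Real.norm_eq_abs] using key

/-- **Lipschitz-type estimate for the Taylor remainder of the positive-part power.**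
For `ν > 1`, `g u = (max u 0)^ν`, `H a h = g (a+h) − g a − ν (max a 0)^{ν−1} h`,
for every `a₀ > 0` there is `C ≥ 0` depending only on `ν, a₀` such that for
`|a| ≤ a₀`, `|h₁| ≤ a₀`, `|h₂| ≤ a₀`:
`|H a h₂ − H a h₁| ≤ C (|h₁| + |h₂|)^{min ν 2 − 1} |h₂ − h₁|`. -/
theorem stmt_15 (ν : ℝ) (hν : 1 < ν) (a₀ : ℝ) (ha₀ : 0 < a₀)
    (H : ℝ → ℝ → ℝ)
    (hH : ∀ a h : ℝ, H a h =
      (max (a + h) 0) ^ ν - (max a 0) ^ ν - ν * (max a 0) ^ (ν - 1) * h) :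
    ∃ C : ℝ, 0 ≤ C ∧ ∀ a h₁ h₂ : ℝ, |a| ≤ a₀ → |h₁| ≤ a₀ → |h₂| ≤ a₀ →
      |H a h₂ - H a h₁| ≤ C * (|h₁| + |h₂|) ^ (min ν 2 - 1) * |h₂ - h₁| := by
  obtain ⟨K, hK, hb⟩ := aux_holder (ν - 1) (by linarith) (2 * a₀) (by linarith)
  have hm : min ν 2 - 1 = min (ν - 1) 1 := by
    rw [← min_sub_sub_right]; norm_num
  have hm0 : 0 ≤ min (ν - 1) 1 := le_min (by linarith) zero_le_one
  refine ⟨ν * K, by positivity, fun a h₁ h₂ ha h1 h2 => ?_⟩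
  rw [hm]
  set M := max |h₁| |h₂| with hM
  have hMa : M ≤ a₀ := max_le h1 h2
  have hMs : M ≤ |h₁| + |h₂| :=
    max_le (by linarith [abs_nonneg h₂]) (by linarith [abs_nonneg h₁])
  have hd : ∀ h : ℝ, HasDerivAt (H a)
      (ν * (max (a + h) 0) ^ (ν - 1) - ν * (max a 0) ^ (ν - 1)) h := by
    intro h
    have e : H a = fun h => (max (a + h) 0) ^ ν - (max a 0) ^ ν
        - ν * (max a 0) ^ (ν - 1) * h := funext (hH a)
    rw [e]
    have d1 := (aux_deriv ν hν (a + h)).comp_const_add a h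
    have d2 := (hasDerivAt_id h).const_mul (ν * (max a 0) ^ (ν - 1))
    rw [mul_one] at d2
    exact (d1.sub_const _).sub d2
  have key := (convex_Icc (-M) M).norm_image_sub_le_of_norm_hasDerivWithin_le
    (f := H a) (C := ν * K * (|h₁| + |h₂|) ^ (min (ν - 1) 1)) (x := h₁) (y := h₂)
    (fun z _ => (hd z).hasDerivWithinAt)
    (fun z hz => by
      have hz' : |z| ≤ M := abs_le.mpr hz
      have h3 := hb (a + z) a (le_trans (abs_add_le _ _) (by linarith)) (by linarith)
      rw [add_sub_cancel_left] at h3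
      have h4 := Real.rpow_le_rpow (abs_nonneg z) (hz'.trans hMs) hm0
      rw [← mul_sub, norm_mul, Real.norm_of_nonneg (by linarith : 0 ≤ ν), mul_assoc,
        Real.norm_eq_abs]
      exact mul_le_mul_of_nonneg_left
        (h3.trans (mul_le_mul_of_nonneg_left h4 hK)) (by linarith))
    (abs_le.mp (le_max_left _ _)) (abs_le.mp (le_max_right _ _))
  simpa [Real.norm_eq_abs] using key
end

section
/- (Differential identity (N.7).) Let O ⊆ ℝ² be open with coordinates (ϖ,z) and write ∂₁ = ∂/∂ϖ, ∂₃ = ∂/∂z. Let f, k, l : O → ℝ be C² with f·l + k² > 0 on O, set Π := √(f·l + k²) and Σ := ∂₁f·∂₁l + ∂₃f·∂₃l + (∂₁k)² + (∂₃k)². Then on O: (1/2)·[ l·(∂₁(∂₁f/Π) + ∂₃(∂₃f/Π) + f·Σ/Π³) + 2k·(∂₁(∂₁k/Π) + ∂₃(∂₃k/Π) + k·Σ/Π³) + f·(∂₁(∂₁l/Π) + ∂₃(∂₃l/Π) + l·Σ/Π³) ] = ∂₁²Π + ∂₃²Π. -/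
/-- One-directional version of the identity. -/
theorem dir_identity (v : ℝ × ℝ) (O : Set (ℝ × ℝ)) (hO : IsOpen O)
    (f k l P : ℝ × ℝ → ℝ)
    (hf : ContDiffOn ℝ 2 f O) (hk : ContDiffOn ℝ 2 k O) (hl : ContDiffOn ℝ 2 l O)
    (hpos : ∀ p ∈ O, 0 < f p * l p + k p ^ 2)
    (hP : P = fun p => Real.sqrt (f p * l p + k p ^ 2)) (p : ℝ × ℝ) (hp : p ∈ O) :
    fderiv ℝ (fun q => fderiv ℝ P q v) p v =
      (1/2) * (l p * fderiv ℝ (fun q => fderiv ℝ f q v / P q) p v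
        + 2 * k p * fderiv ℝ (fun q => fderiv ℝ k q v / P q) p v
        + f p * fderiv ℝ (fun q => fderiv ℝ l q v / P q) p v)
      + (fderiv ℝ f p v * fderiv ℝ l p v + (fderiv ℝ k p v) ^ 2) / P p := by
  have dif : ∀ g : ℝ × ℝ → ℝ, ContDiffOn ℝ 2 g O → ∀ q ∈ O, DifferentiableAt ℝ g q :=
    fun g hg q hq => (hg.contDiffAt (hO.mem_nhds hq)).differentiableAt (by norm_num)
  have hPpos : ∀ q ∈ O, 0 < P q := by
    intro q hq
    rw [hP]
    exact Real.sqrt_pos.mpr (hpos q hq)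
  have hPd : ∀ q ∈ O, DifferentiableAt ℝ P q := by
    intro q hq
    rw [hP]
    exact (((dif f hf q hq).mul (dif l hl q hq)).add ((dif k hk q hq).pow 2)).sqrt
      (hpos q hq).ne'
  have dq : ∀ g : ℝ × ℝ → ℝ, ContDiffOn ℝ 2 g O →
      DifferentiableAt ℝ (fun q => fderiv ℝ g q v / P q) p := by
    intro g hg
    have h1 : DifferentiableAt ℝ (fderiv ℝ g) p :=
      ((hg.contDiffAt (hO.mem_nhds hp)).fderiv_right (m := 1) (by norm_num)).differentiableAt
        (by norm_num)
    have h2 : DifferentiableAt ℝ (fun q => fderiv ℝ g q v) p :=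
      h1.clm_apply (differentiableAt_const v)
    simp only [div_eq_mul_inv]
    exact h2.mul ((hPd p hp).inv (hPpos p hp).ne')
  have first : ∀ q ∈ O, fderiv ℝ P q v =
      (1/2) * (l q * (fderiv ℝ f q v / P q) + 2 * (k q * (fderiv ℝ k q v / P q))
        + f q * (fderiv ℝ l q v / P q)) := by
    intro q hq
    have h := ((((dif f hf q hq).hasFDerivAt.mul (dif l hl q hq).hasFDerivAt).add
      ((dif k hk q hq).hasFDerivAt.pow 2)).sqrt (hpos q hq).ne').fderiv
    have hPe : P = fun y => √((f * l + fun x => k x ^ 2) y) := hP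
    rw [← hPe] at h
    rw [h]
    have hs : √(f q * l q + k q ^ 2) = P q := by rw [hP]
    have := (hPpos q hq).ne'
    simp [hs]
    field_simp
    ring
  have ev : (fun q => fderiv ℝ P q v) =ᶠ[nhds p] fun q =>
      (1/2) * (l q * (fderiv ℝ f q v / P q) + 2 * (k q * (fderiv ℝ k q v / P q))
        + f q * (fderiv ℝ l q v / P q)) :=
    Filter.eventually_of_mem (hO.mem_nhds hp) first
  rw [ev.fderiv_eq]
  have h := ((((dif l hl p hp).hasFDerivAt.mul (dq f hf).hasFDerivAt).add
    (((dif k hk p hp).hasFDerivAt.mul (dq k hk).hasFDerivAt).const_mul 2)).add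
    ((dif f hf p hp).hasFDerivAt.mul (dq l hl).hasFDerivAt)).const_mul (1/2) |>.fderiv
  refine (congrArg (fun L : (ℝ × ℝ) →L[ℝ] ℝ => L v) h).trans ?_
  simp only [ContinuousLinearMap.add_apply, ContinuousLinearMap.smul_apply, smul_eq_mul]
  ring


open Real

/-- **Differential identity (N.7).**
Let `O ⊆ ℝ²` be open, `f, k, l : O → ℝ` of class `C²` with `f·l + k² > 0`,
`Pt := √(f·l + k²)` and `Sg := ∂₁f·∂₁l + ∂₃f·∂₃l + (∂₁k)² + (∂₃k)²`.  Then on `O`: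
`(1/2)[ l·(∂₁(∂₁f/Pt) + ∂₃(∂₃f/Pt) + f·Sg/Pt³) + 2k·(∂₁(∂₁k/Pt) + ∂₃(∂₃k/Pt) + k·Sg/Pt³)
 + f·(∂₁(∂₁l/Pt) + ∂₃(∂₃l/Pt) + l·Sg/Pt³) ] = ∂₁²Pt + ∂₃²Pt`. -/
theorem stmt_18
    (O : Set (ℝ × ℝ)) (hO : IsOpen O)
    (f k l : ℝ × ℝ → ℝ)
    (hf : ContDiffOn ℝ 2 f O) (hk : ContDiffOn ℝ 2 k O) (hl : ContDiffOn ℝ 2 l O)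
    (hpos : ∀ p ∈ O, 0 < f p * l p + k p ^ 2)
    (Pt Sg : ℝ × ℝ → ℝ)
    (hPt : Pt = fun p => Real.sqrt (f p * l p + k p ^ 2))
    (hSg : Sg = fun p => d1 f p * d1 l p + d3 f p * d3 l p + (d1 k p) ^ 2 + (d3 k p) ^ 2) :
    ∀ p ∈ O,
      (1/2) * ( l p * (d1 (fun q => d1 f q / Pt q) p + d3 (fun q => d3 f q / Pt q) p
                        + f p * Sg p / Pt p ^ 3)
              + 2 * k p * (d1 (fun q => d1 k q / Pt q) p + d3 (fun q => d3 k q / Pt q) p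
                        + k p * Sg p / Pt p ^ 3)
              + f p * (d1 (fun q => d1 l q / Pt q) p + d3 (fun q => d3 l q / Pt q) p
                        + l p * Sg p / Pt p ^ 3) )
        = d1 (d1 Pt) p + d3 (d3 Pt) p := by
  intro p hp
  have h1 := dir_identity (1, 0) O hO f k l Pt hf hk hl hpos hPt p hp
  have h3 := dir_identity (0, 1) O hO f k l Pt hf hk hl hpos hPt p hp
  have hP0 : 0 < Pt p := by rw [hPt]; exact Real.sqrt_pos.mpr (hpos p hp)
  have hsq : Pt p ^ 2 = f p * l p + k p ^ 2 := by
    rw [hPt]; exact Real.sq_sqrt (hpos p hp).le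
  have hS : Sg p * (f p * l p + k p ^ 2) / Pt p ^ 3 = Sg p / Pt p := by
    rw [← hsq]; field_simp
  have hSp : Sg p = fderiv ℝ f p (1, 0) * fderiv ℝ l p (1, 0)
      + fderiv ℝ f p (0, 1) * fderiv ℝ l p (0, 1)
      + (fderiv ℝ k p (1, 0)) ^ 2 + (fderiv ℝ k p (0, 1)) ^ 2 := by rw [hSg]; rfl
  have hS2 := hS.trans (congrArg (· / Pt p) hSp)
  unfold d1 d3
  rw [h1, h3]
  linear_combination hS2
end
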